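/- arXiv:1906.10494 — 2 statements merged into one kernel-verified Lean document; each statement's English description precedes it below -/
import Mathlib

section
/- For all vectors v₁,…,v_k ∈ ℤ², if the sequential cone SeqCone(v₁,…,v_k) is not degenerate (i.e., not equal to {(0,0)}), then SeqCone(v₁,…,v_k) = Cone(u,v) for two vectors u, v ∈ ℤ² with nonnegative coordinates, each of which either belongs to {v₁,…,v_k}, or is horizontal, or is vertical. -/
/-- Integer vectors in the plane. -/
abbrev Vec2 : Type := ℤ × ℤ

/-- The norm of a vector: the maximum of the absolute values of its coordinates. -/
def vnorm (v : Vec2) : ℕ := max v.1.natAbs v.2.natAbs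

/-- A vector is positive if both coordinates are positive. -/
def Pos (v : Vec2) : Prop := 0 < v.1 ∧ 0 < v.2

/-- A vector is semi-positive if both coordinates are nonnegative and one is positive. -/
def SemiPos (v : Vec2) : Prop := 0 ≤ v.1 ∧ 0 ≤ v.2 ∧ (0 < v.1 ∨ 0 < v.2)

/-- A vector is vertical if it is of the form (0, a) with a > 0. -/
def Vert (v : Vec2) : Prop := v.1 = 0 ∧ 0 < v.2

/-- A vector is horizontal if it is of the form (a, 0) with a > 0. -/
def Horiz (v : Vec2) : Prop := 0 < v.1 ∧ v.2 = 0

/-- Embedding of integer vectors into the rational plane. -/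
def toQ (v : Vec2) : ℚ × ℚ := ((v.1 : ℚ), (v.2 : ℚ))

/-- The half-line (ray) ℚ≥0 · x generated by a rational vector x. -/
def rayQ (x : ℚ × ℚ) : Set (ℚ × ℚ) := {z | ∃ a : ℚ, 0 ≤ a ∧ z = a • x}

/-- The cone of a finite list of integer vectors: all nonnegative rational
linear combinations. -/
def Cone (vs : List Vec2) : Set (ℚ × ℚ) :=
  {x | ∃ a : Fin vs.length → ℚ, (∀ i, 0 ≤ a i) ∧ x = ∑ i, a i • toQ (vs.get i)}

/-- The sequential cone: nonnegative rational combinations all of whose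
partial sums are in the nonnegative orthant. -/
def SeqCone (vs : List Vec2) : Set (ℚ × ℚ) :=
  {x | ∃ a : Fin vs.length → ℚ, (∀ i, 0 ≤ a i) ∧
    (∀ k : ℕ, k ≤ vs.length →
      0 ≤ ∑ i : Fin vs.length, if (i : ℕ) < k then a i • toQ (vs.get i) else 0) ∧
    x = ∑ i, a i • toQ (vs.get i)}

/-- Two integer vectors are colinear if they generate the same half-line. -/
def Colinear (v w : Vec2) : Prop := rayQ (toQ v) = rayQ (toQ w)

/-- The clockwise relation on nonnegative vectors:
`Clk v u` iff u lies strictly clockwise from v. -/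
def Clk (v u : Vec2) : Prop := 0 < v.2 * u.1 - v.1 * u.2

/-- Membership in the sequential cone, with coefficients indexed by the natural numbers. -/
theorem mem_seqCone_iff (vs : List Vec2) (x : ℚ × ℚ) :
    x ∈ SeqCone vs ↔ ∃ a : ℕ → ℚ, (∀ i, 0 ≤ a i) ∧
      (∀ k ≤ vs.length, 0 ≤ ∑ i ∈ Finset.range k, a i • toQ (vs.getD i 0)) ∧
      x = ∑ i ∈ Finset.range vs.length, a i • toQ (vs.getD i 0) := by
  have total (a : ℕ → ℚ) : ∑ i : Fin vs.length, a i • toQ (vs.get i) =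
      ∑ i ∈ Finset.range vs.length, a i • toQ (vs.getD i 0) := by
    rw [← Fin.sum_univ_eq_sum_range (fun i => a i • toQ (vs.getD i 0))]
    simp
  have truncated_sum (a : ℕ → ℚ) (k : ℕ) (hk : k ≤ vs.length) :
      (∑ i : Fin vs.length, if (i : ℕ) < k then a i • toQ (vs.get i) else 0) =
      ∑ i ∈ Finset.range k, a i • toQ (vs.getD i 0) := by
    have h := Fin.sum_univ_eq_sum_range
      (fun i => if i < k then a i • toQ (vs.getD i 0) else 0) vs.length
    have hfilter : (Finset.range vs.length).filter (· < k) = Finset.range k := by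
      ext i
      simp only [Finset.mem_filter, Finset.mem_range]
      omega
    rw [← hfilter, Finset.sum_filter, ← h]
    simp
  constructor
  · rintro ⟨a, ha, hpart, hx⟩
    let b : ℕ → ℚ := fun i => if h : i < vs.length then a ⟨i, h⟩ else 0
    have hb (i : Fin vs.length) : a i = b i := by simp [b]
    simp only [hb] at hpart hx
    refine ⟨b, fun i => ?_, fun k hk => ?_, ?_⟩
    · by_cases h : i < vs.length <;> simp [b, h, ha]
    · rw [← truncated_sum b k hk]
      exact hpart k hk
    · rw [← total b]
      exact hx
  · rintro ⟨a, ha, hpart, hx⟩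
    refine ⟨fun i => a i, fun i => ha i, fun k hk => ?_, ?_⟩
    · rw [truncated_sum a k hk]
      exact hpart k hk
    · rw [total a]
      exact hx

theorem mem_seqCone_concat (vs : List Vec2) (w : Vec2) (x : ℚ × ℚ) :
    x ∈ SeqCone (vs ++ [w]) ↔
      0 ≤ x ∧ ∃ s ∈ SeqCone vs, ∃ t : ℚ, 0 ≤ t ∧ x = s + t • toQ w := by
  have initial_sum (a : ℕ → ℚ) (k : ℕ) (hk : k ≤ vs.length) :
      ∑ i ∈ Finset.range k, a i • toQ ((vs ++ [w]).getD i 0) =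
      ∑ i ∈ Finset.range k, a i • toQ (vs.getD i 0) := by
    refine Finset.sum_congr rfl fun i hi => ?_
    rw [List.getD_append _ _ _ _ ((Finset.mem_range.1 hi).trans_le hk)]
  have total (a : ℕ → ℚ) :
      ∑ i ∈ Finset.range (vs.length + 1), a i • toQ ((vs ++ [w]).getD i 0) =
      ∑ i ∈ Finset.range vs.length, a i • toQ (vs.getD i 0) + a vs.length • toQ w := by
    rw [Finset.sum_range_succ, initial_sum a _ le_rfl]
    simp
  simp only [mem_seqCone_iff, List.length_append, List.length_singleton]
  constructor
  · rintro ⟨a, ha, hpart, hx⟩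
    refine ⟨hx ▸ hpart _ le_rfl, _, ⟨a, ha, fun k hk => ?_, rfl⟩, a vs.length, ha _, ?_⟩
    · rw [← initial_sum a k hk]
      exact hpart k (by omega)
    · rw [hx, total]
  · rintro ⟨hx0, s, ⟨a, ha, hpart, hs⟩, t, ht, hx⟩
    let b : ℕ → ℚ := fun i => if i < vs.length then a i else t
    have hb (k : ℕ) (hk : k ≤ vs.length) :
        ∑ i ∈ Finset.range k, b i • toQ (vs.getD i 0) =
        ∑ i ∈ Finset.range k, a i • toQ (vs.getD i 0) := by
      refine Finset.sum_congr rfl fun i hi => ?_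
      simp only [b, if_pos ((Finset.mem_range.1 hi).trans_le hk)]
    have hsum : x = ∑ i ∈ Finset.range (vs.length + 1), b i • toQ ((vs ++ [w]).getD i 0) := by
      rw [total, hb _ le_rfl, ← hs, hx]
      simp [b]
    refine ⟨b, fun i => ?_, fun k hk => ?_, hsum⟩
    · by_cases h : i < vs.length <;> simp [b, h, ha, ht]
    · rcases Nat.lt_or_ge vs.length k with h | h
      · obtain rfl : k = vs.length + 1 := by omega
        exact hsum ▸ hx0
      · rw [initial_sum b k h, hb k h]
        exact hpart k h

theorem nonneg_of_mem_seqCone {vs : List Vec2} {x : ℚ × ℚ} (hx : x ∈ SeqCone vs) : 0 ≤ x := by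
  obtain ⟨a, -, hpart, rfl⟩ := (mem_seqCone_iff vs x).1 hx
  exact hpart _ le_rfl

theorem zero_mem_seqCone (vs : List Vec2) : 0 ∈ SeqCone vs :=
  (mem_seqCone_iff vs 0).2 ⟨0, by simp, by simp, by simp⟩

theorem smul_add_smul_mem_seqCone {vs : List Vec2} {x y : ℚ × ℚ} (hx : x ∈ SeqCone vs)
    (hy : y ∈ SeqCone vs) {a b : ℚ} (ha : 0 ≤ a) (hb : 0 ≤ b) :
    a • x + b • y ∈ SeqCone vs := by
  obtain ⟨p, hp, hppart, rfl⟩ := (mem_seqCone_iff vs x).1 hx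
  obtain ⟨q, hq, hqpart, rfl⟩ := (mem_seqCone_iff vs y).1 hy
  have hsum (k : ℕ) : ∑ i ∈ Finset.range k, (a * p i + b * q i) • toQ (vs.getD i 0) =
      a • ∑ i ∈ Finset.range k, p i • toQ (vs.getD i 0) +
      b • ∑ i ∈ Finset.range k, q i • toQ (vs.getD i 0) := by
    simp only [add_smul, mul_smul, Finset.sum_add_distrib, Finset.smul_sum]
  refine (mem_seqCone_iff vs _).2 ⟨fun i => a * p i + b * q i, fun i => ?_, fun k hk => ?_, ?_⟩
  · exact add_nonneg (mul_nonneg ha (hp i)) (mul_nonneg hb (hq i))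
  · rw [hsum]
    exact add_nonneg (smul_nonneg ha (hppart k hk)) (smul_nonneg hb (hqpart k hk))
  · rw [hsum]

/-- The determinant of two vectors in the rational plane. -/
def cross (x y : ℚ × ℚ) : ℚ := x.1 * y.2 - x.2 * y.1

theorem SemiPos.toQ_nonneg {v : Vec2} (hv : SemiPos v) : 0 ≤ toQ v :=
  ⟨Int.cast_nonneg hv.1, Int.cast_nonneg hv.2.1⟩

theorem SemiPos.toQ_pos {v : Vec2} (hv : SemiPos v) : 0 < (toQ v).1 ∨ 0 < (toQ v).2 :=
  hv.2.2.imp Int.cast_pos.2 Int.cast_pos.2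

/-- If `w` is on the far side of the ray of `u` and `s` on the near side, all in the
nonnegative orthant, then `s` is on the near side of the ray of `w`. -/
theorem cross_nonneg_trans {σ : ℚ} {u w s : ℚ × ℚ} (hu : 0 < u.1 ∨ 0 < u.2)
    (hw : 0 ≤ w) (hs : 0 ≤ s) (huw : σ * cross u w ≤ 0) (hus : 0 ≤ σ * cross u s) :
    0 ≤ σ * cross w s := by
  rcases hu with hu | hu
  · refine nonneg_of_mul_nonneg_right (a := u.1) ?_ hu
    have h : u.1 * (σ * cross w s) = w.1 * (σ * cross u s) + s.1 * -(σ * cross u w) := by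
      simp only [cross]; ring
    rw [h]
    exact add_nonneg (mul_nonneg hw.1 hus) (mul_nonneg hs.1 (neg_nonneg.2 huw))
  · refine nonneg_of_mul_nonneg_right (a := u.2) ?_ hu
    have h : u.2 * (σ * cross w s) = w.2 * (σ * cross u s) + s.2 * -(σ * cross u w) := by
      simp only [cross]; ring
    rw [h]
    exact add_nonneg (mul_nonneg hw.2 hus) (mul_nonneg hs.2 (neg_nonneg.2 huw))

/-- `u` spans a boundary ray of the sequential cone: the clockwise one for `σ = 1`, the
counterclockwise one for `σ = -1`. -/
def IsExtremal (σ : ℚ) (vs : List Vec2) (u : Vec2) : Prop :=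
  SemiPos u ∧ (u ∈ vs ∨ Horiz u ∨ Vert u) ∧ toQ u ∈ SeqCone vs ∧
    ∀ x ∈ SeqCone vs, 0 ≤ σ * cross (toQ u) x

theorem eq_zero_or_semiPos_of_smul_nonneg {w : Vec2} {t : ℚ} (ht : 0 ≤ t)
    (h : 0 ≤ t • toQ w) : t • toQ w = 0 ∨ SemiPos w := by
  rcases ht.eq_or_lt with rfl | ht
  · simp
  · have h1 : 0 ≤ w.1 := Int.cast_nonneg_iff.1 (nonneg_of_mul_nonneg_right h.1 ht)
    have h2 : 0 ≤ w.2 := Int.cast_nonneg_iff.1 (nonneg_of_mul_nonneg_right h.2 ht)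
    rcases h1.eq_or_lt with h1' | h1'
    · rcases h2.eq_or_lt with h2' | h2'
      · left
        simp [toQ, ← h1', ← h2']
      · exact .inr ⟨h1, h2, .inr h2'⟩
    · exact .inr ⟨h1, h2, .inl h1'⟩

theorem exists_isExtremal_concat_of_seqCone_eq_zero {σ : ℚ} {vs : List Vec2} (w : Vec2)
    (hvs : SeqCone vs = {0}) :
    SeqCone (vs ++ [w]) = {0} ∨ ∃ u, IsExtremal σ (vs ++ [w]) u := by
  by_cases hw : SemiPos w
  · refine .inr ⟨w, hw, .inl (by simp), ?_, fun x hx => ?_⟩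
    · exact (mem_seqCone_concat vs w _).2
        ⟨hw.toQ_nonneg, 0, zero_mem_seqCone vs, 1, zero_le_one, by simp⟩
    · obtain ⟨-, s, hs, t, -, rfl⟩ := (mem_seqCone_concat vs w x).1 hx
      obtain rfl : s = 0 := by simpa [hvs] using hs
      apply le_of_eq
      simp only [cross, zero_add, Prod.smul_fst, Prod.smul_snd, smul_eq_mul]
      ring
  · refine .inl (Set.eq_singleton_iff_unique_mem.2 ⟨zero_mem_seqCone _, fun x hx => ?_⟩)
    obtain ⟨hx0, s, hs, t, ht, rfl⟩ := (mem_seqCone_concat vs w x).1 hx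
    obtain rfl : s = 0 := by simpa [hvs] using hs
    rw [zero_add] at hx0 ⊢
    exact (eq_zero_or_semiPos_of_smul_nonneg ht hx0).resolve_right hw

theorem cross_add_smul (x s w : ℚ × ℚ) (t : ℚ) :
    cross x (s + t • w) = cross x s + t * cross x w := by
  simp only [cross, Prod.fst_add, Prod.snd_add, Prod.smul_fst, Prod.smul_snd, smul_eq_mul]
  ring

theorem IsExtremal.exists_concat {σ : ℚ} (hσ : σ = 1 ∨ σ = -1) {vs : List Vec2} {u : Vec2}
    (hu : IsExtremal σ vs u) (w : Vec2) : ∃ u', IsExtremal σ (vs ++ [w]) u' := by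
  obtain ⟨hpos, hmem, hcone, hext⟩ := hu
  by_cases huw : 0 ≤ σ * cross (toQ u) (toQ w)
  · refine ⟨u, hpos, hmem.imp_left (by simp +contextual), ?_, fun x hx => ?_⟩
    · exact (mem_seqCone_concat vs w _).2 ⟨hpos.toQ_nonneg, _, hcone, 0, le_rfl, by simp⟩
    · obtain ⟨-, s, hs, t, ht, rfl⟩ := (mem_seqCone_concat vs w x).1 hx
      rw [cross_add_smul, mul_add, mul_left_comm]
      exact add_nonneg (hext s hs) (mul_nonneg ht huw)
  push Not at huw
  by_cases hw : SemiPos w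
  · refine ⟨w, hw, .inl (by simp), ?_, fun x hx => ?_⟩
    · exact (mem_seqCone_concat vs w _).2
        ⟨hw.toQ_nonneg, 0, zero_mem_seqCone vs, 1, zero_le_one, by simp⟩
    · obtain ⟨-, s, hs, t, ht, rfl⟩ := (mem_seqCone_concat vs w x).1 hx
      have hself : cross (toQ w) (toQ w) = 0 := by simp only [cross]; ring
      rw [cross_add_smul, hself, mul_zero, add_zero]
      exact cross_nonneg_trans hpos.toQ_pos hw.toQ_nonneg (nonneg_of_mem_seqCone hs)
        huw.le (hext s hs)
  have hwneg : w.1 < 0 ∨ w.2 < 0 := by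
    by_contra! h
    rcases eq_zero_or_semiPos_of_smul_nonneg (w := w) zero_le_one
      (by rw [one_smul]; exact ⟨Int.cast_nonneg h.1, Int.cast_nonneg h.2⟩) with h0 | h0
    · rw [one_smul] at h0
      simp [h0, cross] at huw
    · exact hw h0
  obtain ⟨hu1, hu2, -⟩ := hpos
  rcases hσ with rfl | rfl
  · have hlt : u.1 * w.2 - u.2 * w.1 < 0 := by
      have : (u.1 * w.2 - u.2 * w.1 : ℚ) < 0 := by simpa [cross, toQ] using huw
      exact_mod_cast this
    have hw2 : w.2 < 0 := by
      by_contra! h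
      have := hwneg.resolve_right h.not_gt
      nlinarith [mul_nonneg hu1 h, mul_nonneg hu2 (neg_nonneg.2 this.le)]
    refine ⟨(u.2 * w.1 - u.1 * w.2, 0), ⟨?_, le_rfl, .inl ?_⟩, .inr (.inl ⟨?_, rfl⟩), ?_,
      fun x hx => ?_⟩
    · dsimp only; linarith
    · dsimp only; linarith
    · dsimp only; linarith
    · refine (mem_seqCone_concat vs w _).2 ⟨⟨?_, ?_⟩, (-w.2 : ℚ) • toQ u + (0 : ℚ) • toQ u,
        smul_add_smul_mem_seqCone hcone hcone ?_ le_rfl, u.2, ?_, ?_⟩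
      · exact Int.cast_nonneg (by dsimp only; linarith)
      · simp [toQ]
      · exact_mod_cast (neg_nonneg.2 hw2.le)
      · exact_mod_cast hu2
      · ext <;> simp [toQ] <;> ring
    · have hx0 := (nonneg_of_mem_seqCone hx).2
      have : (0 : ℚ) ≤ ((u.2 * w.1 - u.1 * w.2 : ℤ) : ℚ) := Int.cast_nonneg (by linarith)
      simpa only [cross, toQ, Int.cast_zero, zero_mul, sub_zero, one_mul] using mul_nonneg this hx0
  · have hlt : 0 < u.1 * w.2 - u.2 * w.1 := by
      have : (0 : ℚ) < (u.1 * w.2 - u.2 * w.1 : ℚ) := by simpa [cross, toQ] using huw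
      exact_mod_cast this
    have hw1 : w.1 < 0 := by
      by_contra! h
      have := hwneg.resolve_left h.not_gt
      nlinarith [mul_nonneg hu2 h, mul_nonneg hu1 (neg_nonneg.2 this.le)]
    refine ⟨(0, u.1 * w.2 - u.2 * w.1), ⟨le_rfl, hlt.le, .inr hlt⟩, .inr (.inr ⟨rfl, hlt⟩), ?_,
      fun x hx => ?_⟩
    · refine (mem_seqCone_concat vs w _).2 ⟨⟨?_, ?_⟩, (-w.1 : ℚ) • toQ u + (0 : ℚ) • toQ u,
        smul_add_smul_mem_seqCone hcone hcone ?_ le_rfl, u.1, ?_, ?_⟩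
      · simp [toQ]
      · exact Int.cast_nonneg hlt.le
      · exact_mod_cast (neg_nonneg.2 hw1.le)
      · exact_mod_cast hu1
      · ext <;> simp [toQ] <;> ring
    · have hx0 := (nonneg_of_mem_seqCone hx).1
      have : (0 : ℚ) ≤ ((u.1 * w.2 - u.2 * w.1 : ℤ) : ℚ) := Int.cast_nonneg hlt.le
      simpa only [cross, toQ, Int.cast_zero, zero_mul, zero_sub, neg_mul, one_mul, neg_neg]
        using mul_nonneg this hx0

theorem seqCone_eq_zero_or_exists_isExtremal {σ : ℚ} (hσ : σ = 1 ∨ σ = -1) (vs : List Vec2) :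
    SeqCone vs = {0} ∨ ∃ u, IsExtremal σ vs u := by
  induction vs using List.reverseRecOn with
  | nil =>
    left
    refine Set.eq_singleton_iff_unique_mem.2 ⟨zero_mem_seqCone _, ?_⟩
    rintro x ⟨a, -, -, rfl⟩
    simp
  | append_singleton vs w ih =>
    rcases ih with h | ⟨u, hu⟩
    · exact exists_isExtremal_concat_of_seqCone_eq_zero w h
    · exact .inr (hu.exists_concat hσ w)

/-- A vector of the nonnegative orthant lying between two vectors of the orthant is a
nonnegative combination of them. -/
theorem exists_combination_of_between {u v x : ℚ × ℚ} (hu0 : 0 ≤ u)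
    (hu : 0 < u.1 ∨ 0 < u.2) (hv : 0 < v.1 ∨ 0 < v.2) (hx : 0 ≤ x) (huv : 0 ≤ cross u v)
    (hux : 0 ≤ cross u x) (hxv : 0 ≤ cross x v) :
    ∃ a b : ℚ, 0 ≤ a ∧ 0 ≤ b ∧ x = a • u + b • v := by
  rcases huv.eq_or_lt with h0 | hpos
  · have hux0 : cross u x = 0 := by
      refine le_antisymm ?_ hux
      simp only [cross] at *
      rcases hv with hv | hv
      · refine nonpos_of_mul_nonpos_right (a := v.1) ?_ hv
        linear_combination mul_nonneg hu0.1 hxv - x.1 * h0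
      · refine nonpos_of_mul_nonpos_right (a := v.2) ?_ hv
        linear_combination mul_nonneg hu0.2 hxv - x.2 * h0
    simp only [cross] at hux0
    rcases hu with hu | hu
    · refine ⟨x.1 / u.1, 0, div_nonneg hx.1 hu.le, le_rfl, ?_⟩
      ext
      · simp [hu.ne']
      · simp only [Prod.snd_add, Prod.smul_snd, smul_eq_mul, zero_mul, add_zero]
        field_simp
        linarith
    · refine ⟨x.2 / u.2, 0, div_nonneg hx.2 hu.le, le_rfl, ?_⟩
      ext
      · simp only [Prod.fst_add, Prod.smul_fst, smul_eq_mul, zero_mul, add_zero]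
        field_simp
        linarith
      · simp [hu.ne']
  · refine ⟨cross x v / cross u v, cross u x / cross u v, div_nonneg hxv huv,
      div_nonneg hux huv, ?_⟩
    have := hpos.ne'
    ext <;> simp only [Prod.fst_add, Prod.snd_add, Prod.smul_fst, Prod.smul_snd, smul_eq_mul] <;>
      field_simp <;> simp only [cross] <;> ring

theorem mem_cone_pair {u v : Vec2} {x : ℚ × ℚ} :
    x ∈ Cone [u, v] ↔ ∃ a b : ℚ, 0 ≤ a ∧ 0 ≤ b ∧ x = a • toQ u + b • toQ v := by
  constructor
  · rintro ⟨a, ha, rfl⟩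
    exact ⟨a 0, a 1, ha 0, ha 1, Fin.sum_univ_two _⟩
  · rintro ⟨a, b, ha, hb, rfl⟩
    refine ⟨![a, b], fun i => ?_,
      (Fin.sum_univ_two fun i : Fin 2 => ![a, b] i • toQ ([u, v].get i)).symm⟩
    change Fin 2 at i
    fin_cases i
    exacts [ha, hb]

/-- If the sequential cone of `v₁, …, v_k` is not degenerate
(i.e. not equal to `{(0,0)}`), then it equals the cone of two vectors `u, v`
with nonnegative coordinates, each of which either occurs among `v₁, …, v_k`,
or is horizontal, or is vertical. -/
theorem seqCone_eq_cone_of_two (vs : List Vec2) (h : SeqCone vs ≠ {(0 : ℚ × ℚ)}) :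
    ∃ u v : Vec2, (0 : Vec2) ≤ u ∧ (0 : Vec2) ≤ v ∧
      SeqCone vs = Cone [u, v] ∧
      (u ∈ vs ∨ Horiz u ∨ Vert u) ∧
      (v ∈ vs ∨ Horiz v ∨ Vert v) := by
  obtain ⟨u, hu, hu_mem, hu_cone, hu_ext⟩ :=
    (seqCone_eq_zero_or_exists_isExtremal (.inl rfl) vs).resolve_left h
  obtain ⟨v, hv, hv_mem, hv_cone, hv_ext⟩ :=
    (seqCone_eq_zero_or_exists_isExtremal (.inr rfl) vs).resolve_left h
  refine ⟨u, v, ⟨hu.1, hu.2.1⟩, ⟨hv.1, hv.2.1⟩, ?_, hu_mem, hv_mem⟩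
  ext x
  rw [mem_cone_pair]
  constructor
  · intro hx
    have hxv : 0 ≤ cross x (toQ v) := by
      have := hv_ext x hx
      simp only [cross] at this ⊢
      linarith
    exact exists_combination_of_between hu.toQ_nonneg hu.toQ_pos hv.toQ_pos
      (nonneg_of_mem_seqCone hx) (by simpa using hu_ext _ hv_cone)
      (by simpa using hu_ext x hx) hxv
  · rintro ⟨a, b, ha, hb, rfl⟩
    exact smul_add_smul_mem_seqCone hu_cone hv_cone ha hb
end

section
/- Thin-Thick Dichotomy: there exists a polynomial p with natural-number coefficients such that for every 2-VASS V with n control states and norm M, every (0,0)-run of V is either p(nM)ⁿ-thin or p(nM)ⁿ-thick. -/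
/-- Projection of a vector on coordinate `j` (`Fin 2` indexes the two coordinates). -/
def proj (j : Fin 2) (v : Vec2) : ℤ := if j = 0 then v.1 else v.2

/-! ### 2-dimensional vector addition systems with states (2-VASS) -/

/-- A transition of a 2-VASS with control states `Fin n`:
a source state, an effect vector, and a target state. -/
abbrev Transition (n : ℕ) : Type := Fin n × Vec2 × Fin n

/-- A 2-VASS with control states `Fin n` is a finite set of transitions. -/
abbrev VASS (n : ℕ) : Type := Finset (Transition n)

/-- The norm of a 2-VASS: the largest norm of an effect of a transition. -/
def vassNorm {n : ℕ} (V : VASS n) : ℕ := V.sup (fun t => vnorm t.2.1)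

/-- The effect of a sequence of transitions: the sum of the individual effects. -/
def effect {n : ℕ} (π : List (Transition n)) : Vec2 := (π.map (fun t => t.2.1)).sum

/-- A path of `V`: a sequence of transitions of `V` in which
consecutive control states match. -/
def IsPath {n : ℕ} (V : VASS n) (π : List (Transition n)) : Prop :=
  (∀ t ∈ π, t ∈ V) ∧ π.Chain' (fun s t => s.2.2 = t.1)

/-- The path `π` starts at control state `q` (vacuously true for the empty path). -/
def startsAt {n : ℕ} (π : List (Transition n)) (q : Fin n) : Prop :=
  ∀ t ∈ π.head?, t.1 = q

/-- The control state after the first `i` transitions of `π`, for a path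
starting at control state `q`. -/
def stateAt {n : ℕ} (π : List (Transition n)) (q : Fin n) (i : ℕ) : Fin n :=
  (((π.take i).getLast?).map (fun t => t.2.2)).getD q

/-- The final control state of a path `π` starting at control state `q`. -/
def endState {n : ℕ} (π : List (Transition n)) (q : Fin n) : Fin n := stateAt π q π.length

/-- The counter values after the first `i` transitions of `π`, starting from
counter values `u`. -/
def vecAt {n : ℕ} (π : List (Transition n)) (u : Vec2) (i : ℕ) : Vec2 :=
  u + effect (π.take i)

/-- The path `π` is enabled in the configuration `(q, u)`: it starts at `q`
and all intermediate counter values are nonnegative. -/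
def Enabled {n : ℕ} (π : List (Transition n)) (q : Fin n) (u : Vec2) : Prop :=
  startsAt π q ∧ ∀ i ≤ π.length, 0 ≤ vecAt π u i

/-- For `j ∈ {1,2}`, the path `π` is `{j}`-enabled in the configuration `(q, u)`:
it starts at `q` and the `j`-th coordinate of all intermediate counter values is
nonnegative. -/
def JEnabled {n : ℕ} (π : List (Transition n)) (q : Fin n) (u : Vec2) (j : Fin 2) : Prop :=
  startsAt π q ∧ ∀ i ≤ π.length, 0 ≤ proj j (vecAt π u i)

/-- A run of `V`: a path of `V` enabled in the configuration `(q, u)`.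
Its source is `(q, u)`, its target is `(endState π q, vecAt π u π.length)`,
and its configurations are `(stateAt π q i, vecAt π u i)` for `i ≤ π.length`. -/
def IsRun {n : ℕ} (V : VASS n) (π : List (Transition n)) (q : Fin n) (u : Vec2) : Prop :=
  IsPath V π ∧ Enabled π q u

/-- A (0,0)-run of `V`: a run whose source and target counter values are `(0,0)`. -/
def IsZeroRun {n : ℕ} (V : VASS n) (π : List (Transition n)) (q : Fin n) : Prop :=
  IsRun V π q 0 ∧ effect π = 0

/-- A cycle of `V`: a nonempty path of `V` whose starting and ending control
states coincide. -/
def IsCycle {n : ℕ} (V : VASS n) (γ : List (Transition n)) : Prop :=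
  IsPath V γ ∧ γ ≠ [] ∧ γ.head?.map (fun t => t.1) = γ.getLast?.map (fun t => t.2.2)

/-! ### Belts and thin runs -/

/-- Embedding of integer vectors into the Euclidean plane. -/
noncomputable def toE (v : Vec2) : EuclideanSpace ℝ (Fin 2) :=
  (WithLp.equiv 2 (Fin 2 → ℝ)).symm ![(v.1 : ℝ), (v.2 : ℝ)]

/-- The half-line `ℝ≥0 · v` in the Euclidean plane induced by `v`. -/
noncomputable def rayE (v : Vec2) : Set (EuclideanSpace ℝ (Fin 2)) :=
  {x | ∃ a : ℝ, 0 ≤ a ∧ x = a • toE v}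

/-- The Euclidean distance from the point `u` to the half-line induced by `v`. -/
noncomputable def distToRay (u v : Vec2) : ℝ := Metric.infDist (toE u) (rayE v)

/-- `u` belongs to the belt of direction `v` and width `W`:
`u` is nonnegative and its Euclidean distance to the half-line `ℓ_v` is at most `W`. -/
def InBelt (u : Vec2) (v : Vec2) (W : ℝ) : Prop :=
  (0 : Vec2) ≤ u ∧ distToRay u v ≤ W

/-- A run (given by its path `π` and source counter values `u`) is `A`-thin if
each of its configurations lies in some `A`-belt, i.e. a belt whose direction
has norm at most `A` and whose width is at most `A`. -/
def IsThin {n : ℕ} (A : ℕ) (π : List (Transition n)) (u : Vec2) : Prop :=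
  ∀ i ≤ π.length, ∃ v : Vec2, (0 : Vec2) ≤ v ∧ vnorm v ≤ A ∧
    ∃ W : ℝ, W ≤ (A : ℝ) ∧ InBelt (vecAt π u i) v W

/-! ### Thick runs -/

/-- The reversal of a transition. -/
def revT {n : ℕ} (t : Transition n) : Transition n := (t.2.2, -t.2.1, t.1)

/-- The reversal of a 2-VASS. -/
def revV {n : ℕ} (V : VASS n) : VASS n := V.image revT

/-- The reversal of a path: the reversed sequence of reversed transitions. -/
def revPath {n : ℕ} (π : List (Transition n)) : List (Transition n) :=
  (π.reverse).map revT

/-- Four vectors `v₁, v₂, v₃, v₄` are `A`-sequentially enabled in the run given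
by the path `π` with source configuration `(q, u)`:  `π` factors into
`ρ₁ρ₂ρ₃ρ₄ρ₅` and there are cycles `π₁, π₂, π₃, π₄` of `V` of length at most `A`
with effects `v₁, v₂, v₃, v₄` such that: `v₁` is semi-positive, `π₁` is
enabled in `trg(ρ₁)` and both coordinates are bounded by `A` along `ρ₁`;
if `v₁` is positive then `π₂` is ∅-enabled in `trg(ρ₂)`, and otherwise,
for the coordinate `j` with `v₁[j] = 0`, `π₂` is `{j}`-enabled in `trg(ρ₂)` and
the `j`-th coordinate is bounded by `A` along `ρ₂`; and `π₃`, `π₄` are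
∅-enabled in `trg(ρ₃)`, `trg(ρ₄)` respectively. -/
def SeqEnabled {n : ℕ} (V : VASS n) (A : ℕ) (π : List (Transition n))
    (q : Fin n) (u : Vec2) (v₁ v₂ v₃ v₄ : Vec2) : Prop :=
  ∃ ρ₁ ρ₂ ρ₃ ρ₄ ρ₅ π₁ π₂ π₃ π₄ : List (Transition n),
    π = ρ₁ ++ ρ₂ ++ ρ₃ ++ ρ₄ ++ ρ₅ ∧
    IsCycle V π₁ ∧ IsCycle V π₂ ∧ IsCycle V π₃ ∧ IsCycle V π₄ ∧
    π₁.length ≤ A ∧ π₂.length ≤ A ∧ π₃.length ≤ A ∧ π₄.length ≤ A ∧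
    effect π₁ = v₁ ∧ effect π₂ = v₂ ∧ effect π₃ = v₃ ∧ effect π₄ = v₄ ∧
    SemiPos v₁ ∧
    Enabled π₁ (stateAt π q ρ₁.length) (vecAt π u ρ₁.length) ∧
    (∀ i ≤ ρ₁.length, (vecAt π u i).1 ≤ (A : ℤ) ∧ (vecAt π u i).2 ≤ (A : ℤ)) ∧
    (Pos v₁ → startsAt π₂ (stateAt π q (ρ₁.length + ρ₂.length))) ∧
    (¬ Pos v₁ → ∃ j : Fin 2, proj j v₁ = 0 ∧
      JEnabled π₂ (stateAt π q (ρ₁.length + ρ₂.length))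
        (vecAt π u (ρ₁.length + ρ₂.length)) j ∧
      (∀ i : ℕ, ρ₁.length ≤ i → i ≤ ρ₁.length + ρ₂.length →
        proj j (vecAt π u i) ≤ (A : ℤ))) ∧
    startsAt π₃ (stateAt π q (ρ₁.length + ρ₂.length + ρ₃.length)) ∧
    startsAt π₄ (stateAt π q (ρ₁.length + ρ₂.length + ρ₃.length + ρ₄.length))

/-- A set of rational vectors is non-trivial if it contains two non-colinear
nonzero vectors. -/
def NonTrivial (s : Set (ℚ × ℚ)) : Prop :=
  ∃ x ∈ s, ∃ y ∈ s, x ≠ 0 ∧ y ≠ 0 ∧ rayQ x ≠ rayQ y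

/-- A (0,0)-run (given by its path `π` and source state `q`) is `A`-thick if it
factors into `τ = ρ ρ'` such that some vectors `v₁,…,v₄` are `A`-sequentially
enabled in `ρ`, some vectors `v'₁,…,v'₄` are `A`-sequentially enabled in the
reversal of `ρ'` (a run of the reversal of `V`, whose source is the target of
`τ`), and the intersection of the corresponding sequential cones is
non-trivial. -/
def IsThick {n : ℕ} (V : VASS n) (A : ℕ) (π : List (Transition n)) (q : Fin n) : Prop :=
  ∃ ρ ρ' : List (Transition n), π = ρ ++ ρ' ∧
    ∃ v₁ v₂ v₃ v₄ w₁ w₂ w₃ w₄ : Vec2,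
      SeqEnabled V A ρ q 0 v₁ v₂ v₃ v₄ ∧
      SeqEnabled (revV V) A (revPath ρ') (endState π q) 0 w₁ w₂ w₃ w₄ ∧
      NonTrivial (SeqCone [v₁, v₂, v₃, v₄] ∩ SeqCone [w₁, w₂, w₃, w₄])

/-! ### Walks -/

/-- `Walk V p π q`: the list `π` is a path of `V` from control state `p` to `q`. -/
def Walk {n : ℕ} (V : VASS n) : Fin n → List (Transition n) → Fin n → Prop
  | p, [], q => p = q
  | p, t :: π, q => t ∈ V ∧ t.1 = p ∧ Walk V t.2.2 π q

section Walks

variable {n : ℕ} {V : VASS n}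

lemma stateAt_zero (π : List (Transition n)) (p : Fin n) : stateAt π p 0 = p := by
  simp [stateAt]

lemma stateAt_nil (p : Fin n) (i : ℕ) : stateAt [] p i = p := by
  simp [stateAt]

lemma stateAt_cons_succ (t : Transition n) (π : List (Transition n)) (p : Fin n) (i : ℕ) :
    stateAt (t :: π) p (i + 1) = stateAt π t.2.2 i := by
  simp only [stateAt, List.take_succ_cons, List.getLast?_cons]
  cases h : (List.take i π).getLast? <;> simp

lemma walk_append {p r : Fin n} {a b : List (Transition n)} :
    Walk V p (a ++ b) r ↔ ∃ q, Walk V p a q ∧ Walk V q b r := by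
  induction a generalizing p with
  | nil => simp [Walk]
  | cons t a ih => simp [Walk, ih, and_assoc]

lemma Walk.append {p q r : Fin n} {a b : List (Transition n)} (ha : Walk V p a q)
    (hb : Walk V q b r) : Walk V p (a ++ b) r := walk_append.2 ⟨q, ha, hb⟩

lemma Walk.take {p q : Fin n} {π : List (Transition n)} (h : Walk V p π q) (i : ℕ) :
    Walk V p (π.take i) (stateAt π p i) := by
  induction π generalizing p i with
  | nil => simp [Walk, stateAt_nil]
  | cons t π ih =>
    cases i with
    | zero => simp [Walk, stateAt_zero]
    | succ i => simpa [Walk, stateAt_cons_succ] using ⟨h.1, h.2.1, ih h.2.2 i⟩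

lemma Walk.drop {p q : Fin n} {π : List (Transition n)} (h : Walk V p π q) (i : ℕ) :
    Walk V (stateAt π p i) (π.drop i) q := by
  induction π generalizing p i with
  | nil => simpa [stateAt_nil] using h
  | cons t π ih =>
    cases i with
    | zero => simpa [stateAt_zero] using h
    | succ i => simpa [stateAt_cons_succ] using ih h.2.2 i

lemma Walk.end_unique {p q r : Fin n} {π : List (Transition n)} (h : Walk V p π q)
    (h' : Walk V p π r) : q = r := by
  induction π generalizing p with
  | nil => exact h.symm.trans h'
  | cons t π ih => exact ih h.2.2 h'.2.2

lemma Walk.mem {p q : Fin n} {π : List (Transition n)} (h : Walk V p π q) :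
    ∀ t ∈ π, t ∈ V := by
  induction π generalizing p with
  | nil => simp
  | cons t π ih => exact List.forall_mem_cons.2 ⟨h.1, ih h.2.2⟩

lemma Walk.startsAt {p q : Fin n} {π : List (Transition n)} (h : Walk V p π q) :
    startsAt π p := by
  cases π with
  | nil => simp [_root_.startsAt]
  | cons t π => simpa [_root_.startsAt] using h.2.1

lemma Walk.endState_eq {p q : Fin n} {π : List (Transition n)} (h : Walk V p π q) :
    endState π p = q := by
  have := h.take π.length
  rw [List.take_length] at this
  exact this.end_unique h

lemma Walk.isPath {p q : Fin n} {π : List (Transition n)} (h : Walk V p π q) :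
    IsPath V π := by
  refine ⟨h.mem, ?_⟩
  induction π generalizing p with
  | nil => exact List.isChain_nil
  | cons t π ih =>
    refine List.isChain_cons.2 ⟨?_, ih h.2.2⟩
    intro s hs
    exact (h.2.2.startsAt s hs).symm

lemma walk_of_isPath {p : Fin n} {π : List (Transition n)} (h : IsPath V π)
    (hs : startsAt π p) : Walk V p π (endState π p) := by
  induction π generalizing p with
  | nil => simp [Walk, endState, stateAt_nil]
  | cons t π ih =>
    obtain ⟨hV, hc⟩ := h
    obtain ⟨h1, h2⟩ := List.isChain_cons.1 hc
    refine ⟨hV t (by simp), hs t (by simp), ?_⟩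
    have := ih (p := t.2.2) ⟨fun s hs => hV s (by simp [hs]), h2⟩
      (fun s hs => (h1 s hs).symm)
    simpa [endState, stateAt_cons_succ] using this

lemma Walk.isCycle {p : Fin n} {γ : List (Transition n)} (h : Walk V p γ p) (h0 : γ ≠ []) :
    IsCycle V γ := by
  refine ⟨h.isPath, h0, ?_⟩
  have he := h.endState_eq
  have hs := h.startsAt
  cases γ with
  | nil => exact absurd rfl h0
  | cons t π =>
    have h1 : t.1 = p := hs t (by simp)
    simp only [endState, stateAt, List.take_length] at he
    rw [List.getLast?_cons] at he ⊢
    simpa [h1] using he.symm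

lemma effect_append (a b : List (Transition n)) : effect (a ++ b) = effect a + effect b := by
  simp [effect]

lemma vecAt_zero (π : List (Transition n)) (x : Vec2) : vecAt π x 0 = x := by
  simp [vecAt, effect]

lemma vecAt_append_left (a b : List (Transition n)) (x : Vec2) {i : ℕ} (h : i ≤ a.length) :
    vecAt (a ++ b) x i = vecAt a x i := by
  simp [vecAt, List.take_append_of_le_length h]

lemma vecAt_append_right (a b : List (Transition n)) (x : Vec2) (i : ℕ) :
    vecAt (a ++ b) x (a.length + i) = vecAt b (x + effect a) i := by
  simp [vecAt, List.take_length_add_append, effect_append, add_assoc]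

/-- All vectors along `π`, started in `x`, satisfy `P`. -/
def Along (P : Vec2 → Prop) (π : List (Transition n)) (x : Vec2) : Prop :=
  ∀ i ≤ π.length, P (vecAt π x i)

lemma along_append {P : Vec2 → Prop} {a b : List (Transition n)} {x : Vec2} :
    Along P (a ++ b) x ↔ Along P a x ∧ Along P b (x + effect a) := by
  constructor
  · intro h
    refine ⟨fun i hi => ?_, fun i hi => ?_⟩
    · rw [← vecAt_append_left a b x hi]
      exact h i (by simp; omega)
    · rw [← vecAt_append_right]
      exact h _ (by simp; omega)
  · rintro ⟨h1, h2⟩ i hi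
    rcases le_total i a.length with h | h
    · rw [vecAt_append_left a b x h]
      exact h1 i h
    · obtain ⟨k, rfl⟩ := Nat.exists_eq_add_of_le h
      rw [vecAt_append_right]
      exact h2 k (by simp at hi; omega)

lemma stateAt_drop (π : List (Transition n)) (p : Fin n) (i k : ℕ) :
    stateAt (π.drop i) (stateAt π p i) k = stateAt π p (i + k) := by
  induction π generalizing p i with
  | nil => simp [stateAt_nil]
  | cons t π ih =>
    cases i with
    | zero => simp [stateAt_zero]
    | succ i => simpa [stateAt_cons_succ, Nat.succ_add] using ih t.2.2 i

lemma vecAt_drop (π : List (Transition n)) (x : Vec2) (i k : ℕ) :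
    vecAt (π.drop i) (vecAt π x i) k = vecAt π x (i + k) := by
  simp [vecAt, List.take_add, effect_append, add_assoc]

/-- The part of `π` between times `i` and `j`. -/
def seg (π : List (Transition n)) (i j : ℕ) : List (Transition n) := (π.drop i).take (j - i)

lemma seg_length {π : List (Transition n)} {i j : ℕ} (hj : j ≤ π.length) :
    (seg π i j).length = j - i := by
  simp [seg]; omega

lemma Walk.seg {p q : Fin n} {π : List (Transition n)} (h : Walk V p π q) {i j : ℕ}
    (hij : i ≤ j) : Walk V (stateAt π p i) (seg π i j) (stateAt π p j) := by
  have := (h.drop i).take (j - i)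
  rwa [stateAt_drop, Nat.add_sub_cancel' hij] at this

lemma vecAt_seg (π : List (Transition n)) (x : Vec2) {i j k : ℕ} (h : i + k ≤ j) :
    vecAt (seg π i j) (vecAt π x i) k = vecAt π x (i + k) := by
  rw [← vecAt_drop]
  simp only [seg, vecAt, List.take_take]
  rw [min_eq_left (by omega)]

lemma vecAt_add_effect_seg (π : List (Transition n)) (x : Vec2) {i j : ℕ} (h : i ≤ j) :
    vecAt π x i + effect (seg π i j) = vecAt π x j := by
  have := vecAt_drop π x i (j - i)
  rw [Nat.add_sub_cancel' h] at this
  rw [← this]; rfl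

lemma Walk.mem_seg {p q : Fin n} {π : List (Transition n)} (h : Walk V p π q) {i j : ℕ}
    (hj : j ≤ π.length) {t : Transition n} (ht : t ∈ _root_.seg π i j) :
    ∃ k, i ≤ k ∧ k < j ∧ t.1 = stateAt π p k := by
  obtain ⟨k, hk, rfl⟩ := List.getElem_of_mem ht
  rw [seg_length hj] at hk
  refine ⟨i + k, by omega, by omega, ?_⟩
  have hd := (h.drop (i + k)).startsAt
  apply hd
  have : i + k < π.length := by omega
  simp [_root_.seg]

lemma seg_split (π : List (Transition n)) {i j : ℕ} (h : i ≤ j) :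
    π = π.take i ++ seg π i j ++ π.drop j := by
  have h1 : π.drop j = (π.drop i).drop (j - i) := by
    rw [List.drop_drop, Nat.add_sub_cancel' h]
  rw [h1, List.append_assoc, seg, List.take_append_drop, List.take_append_drop]

/-- A long walk contains a nonempty cycle of length at most the number of states. -/
lemma Walk.exists_cut {p q : Fin n} {π : List (Transition n)} (h : Walk V p π q)
    (hl : n ≤ π.length) : ∃ a γ b r, π = a ++ γ ++ b ∧ Walk V p a r ∧ Walk V r γ r ∧
      Walk V r b q ∧ γ ≠ [] ∧ γ.length ≤ n := by
  obtain ⟨i, j, hne, hij⟩ := Fintype.exists_ne_map_eq_of_card_lt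
    (fun i : Fin (n + 1) => stateAt π p i) (by simp)
  wlog hlt : i < j generalizing i j
  · exact this j i hne.symm hij.symm (lt_of_le_of_ne (not_lt.1 hlt) hne.symm)
  have hlt' : (i : ℕ) < j := hlt
  have hj : (j : ℕ) ≤ n := by omega
  have hlen := seg_length (π := π) (i := i) (j := j) (by omega)
  refine ⟨π.take i, _root_.seg π i j, π.drop j, stateAt π p i, seg_split π hlt'.le, h.take _, ?_,
    ?_, ?_, by omega⟩
  · have := h.seg hlt'.le
    rwa [← hij] at this
  · have := h.drop j
    rwa [← hij] at this
  · intro h0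
    rw [h0] at hlen
    simp at hlen
    omega

/-- A walk can be shortened by removing short cycles, all of which decrease `f`. -/
lemma Walk.exists_short {p q : Fin n} {π : List (Transition n)} (h : Walk V p π q)
    (f : Vec2 →+ ℤ) (S : Fin n → Prop) (hS : ∀ t ∈ π, S t.1)
    (hf : ∀ r γ, S r → γ ≠ [] → γ.length ≤ n → Walk V r γ r → f (effect γ) ≤ 0) :
    ∃ π', Walk V p π' q ∧ π'.length ≤ n ∧ f (effect π) ≤ f (effect π') := by
  induction hk : π.length using Nat.strong_induction_on generalizing π with
  | _ k ih =>
  by_cases hn : π.length ≤ n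
  · exact ⟨π, h, hn, le_rfl⟩
  obtain ⟨a, γ, b, r, rfl, ha, hγ, hb, h0, hlen⟩ := h.exists_cut (by omega)
  have hpos : 0 < γ.length := List.length_pos_iff.2 h0
  obtain ⟨π', h1, h2, h3⟩ := ih (a ++ b).length (by simp at hk ⊢; omega) (ha.append hb)
    (fun t ht => hS t (by simp at ht ⊢; tauto)) rfl
  refine ⟨π', h1, h2, le_trans ?_ h3⟩
  have hr : S r := by
    cases γ with
    | nil => exact absurd rfl h0
    | cons t γ =>
      have := hS t (by simp)
      rwa [hγ.2.1] at this
  have := hf r γ hr h0 hlen hγ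
  simp only [effect_append, map_add]
  omega

/-- A run inside a box can be shortened to a run without repeated configurations. -/
lemma Walk.exists_short_run {p q : Fin n} {π : List (Transition n)} (h : Walk V p π q)
    (x : Vec2) (H : ℕ)
    (hb : Along (fun y => 0 ≤ y ∧ y.1 ≤ (H : ℤ) ∧ y.2 ≤ (H : ℤ)) π x) :
    ∃ π', Walk V p π' q ∧ π'.length ≤ n * (H + 1) ^ 2 ∧ effect π' = effect π ∧
      Along (fun y => 0 ≤ y) π' x := by
  induction hk : π.length using Nat.strong_induction_on generalizing π with
  | _ k ih =>
  by_cases hn : π.length ≤ n * (H + 1) ^ 2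
  · exact ⟨π, h, hn, rfl, fun i hi => (hb i hi).1⟩
  obtain ⟨i, j, hne, hij⟩ := Fintype.exists_ne_map_eq_of_card_lt
    (fun i : Fin (n * (H + 1) ^ 2 + 1) => ((stateAt π p i,
      (⟨(vecAt π x i).1.toNat, by
          have := hb i (by omega); have := this.2.1; omega⟩ : Fin (H + 1)),
      (⟨(vecAt π x i).2.toNat, by
          have := hb i (by omega); have := this.2.2; omega⟩ : Fin (H + 1))) :
        Fin n × Fin (H + 1) × Fin (H + 1))) (by simp; ring_nf; omega)
  wlog hlt : i < j generalizing i j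
  · exact this j i hne.symm hij.symm (lt_of_le_of_ne (not_lt.1 hlt) hne.symm)
  have hlt' : (i : ℕ) < j := hlt
  have hjl : (j : ℕ) ≤ π.length := by omega
  simp only [Prod.mk.injEq, Fin.mk.injEq] at hij
  obtain ⟨hst, hx1, hx2⟩ := hij
  have hi0 := (hb i (by omega)).1
  have hj0 := (hb j (by omega)).1
  have hveq : vecAt π x i = vecAt π x j := by
    have a1 := hi0.1; have a2 := hi0.2; have b1 := hj0.1; have b2 := hj0.2
    simp only [Prod.fst_zero, Prod.snd_zero] at a1 a2 b1 b2
    ext <;> omega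
  have he : effect (_root_.seg π i j) = 0 := by
    have := vecAt_add_effect_seg π x hlt'.le
    rw [← hveq] at this
    simpa using this
  have hsp := seg_split π hlt'.le
  have hw : Walk V p (π.take i ++ π.drop j) q := (h.take i).append (hst ▸ h.drop j)
  have hal : Along (fun y => 0 ≤ y ∧ y.1 ≤ (H : ℤ) ∧ y.2 ≤ (H : ℤ))
      (π.take i ++ π.drop j) x := by
    rw [hsp, along_append, along_append, effect_append, he, add_zero] at hb
    exact along_append.2 ⟨hb.1.1, hb.2⟩
  obtain ⟨π', h1, h2, h3, h4⟩ := ih _ (by simp at hk ⊢; omega) hw hal rfl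
  refine ⟨π', h1, h2, h3.trans ?_, h4⟩
  conv_rhs => rw [hsp]
  simp [effect_append, he]

end Walks

/-! ### Runs in time -/

/-- The linear form with coefficients `α` and `β`. -/
def lin (α β : ℤ) : Vec2 →+ ℤ where
  toFun v := α * v.1 + β * v.2
  map_zero' := by simp
  map_add' v w := by simp; ring

lemma lin_apply (α β : ℤ) (v : Vec2) : lin α β v = α * v.1 + β * v.2 := rfl

/-- There is a nonempty cycle of effect `w` at `p`, of length at most the number of states. -/
def ShortCycle {n : ℕ} (V : VASS n) (p : Fin n) (w : Vec2) : Prop :=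
  ∃ γ, γ ≠ [] ∧ γ.length ≤ n ∧ Walk V p γ p ∧ effect γ = w

/-- A semi-positive cycle of length at most `L` is enabled in `(p, x)`. -/
def SemiPosCycle {n : ℕ} (V : VASS n) (L : ℕ) (p : Fin n) (x : Vec2) : Prop :=
  ∃ γ, Walk V p γ p ∧ γ.length ≤ L ∧ SemiPos (effect γ) ∧ Along (fun y => 0 ≤ y) γ x

/-- All transitions of `V` have norm at most `M`. -/
def NormLE {n : ℕ} (V : VASS n) (M : ℕ) : Prop :=
  ∀ t ∈ V, |t.2.1.1| ≤ (M : ℤ) ∧ |t.2.1.2| ≤ (M : ℤ)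

section Runs

variable {n : ℕ} {V : VASS n}

lemma map_effect_le (f : Vec2 →+ ℤ) (c : ℤ) (π : List (Transition n))
    (h : ∀ t ∈ π, f t.2.1 ≤ c) : f (effect π) ≤ π.length * c := by
  induction π with
  | nil => simp [effect]
  | cons t π ih =>
    have h1 := h t (by simp)
    have h2 := ih (fun s hs => h s (by simp [hs]))
    have : effect (t :: π) = t.2.1 + effect π := by simp [effect]
    rw [this, map_add]
    push_cast [List.length_cons]
    linarith

lemma lin_le_of_abs_le {α β M : ℤ} {v : Vec2} (h : |v.1| ≤ M ∧ |v.2| ≤ M) :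
    lin α β v ≤ M * (|α| + |β|) := by
  have h1 : α * v.1 ≤ |α| * M := (le_abs_self _).trans (by rw [abs_mul]; gcongr; exact h.1)
  have h2 : β * v.2 ≤ |β| * M := (le_abs_self _).trans (by rw [abs_mul]; gcongr; exact h.2)
  rw [lin_apply]
  linarith

lemma Walk.lin_effect_le {M : ℕ} (hM : NormLE V M) {p q : Fin n} {π : List (Transition n)}
    (h : Walk V p π q) (α β : ℤ) : lin α β (effect π) ≤ π.length * (M * (|α| + |β|)) :=
  map_effect_le _ _ _ fun t ht => lin_le_of_abs_le (hM t (h.mem t ht))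

lemma Walk.abs_effect_le {M : ℕ} (hM : NormLE V M) {p q : Fin n} {π : List (Transition n)}
    (h : Walk V p π q) : |(effect π).1| ≤ π.length * M ∧ |(effect π).2| ≤ π.length * M := by
  have h1 := h.lin_effect_le hM 1 0
  have h2 := h.lin_effect_le hM (-1) 0
  have h3 := h.lin_effect_le hM 0 1
  have h4 := h.lin_effect_le hM 0 (-1)
  simp [lin_apply] at h1 h2 h3 h4
  exact ⟨abs_le.2 ⟨by linarith, h1⟩, abs_le.2 ⟨by linarith, h3⟩⟩

lemma ShortCycle.abs_le {M : ℕ} (hM : NormLE V M) {p : Fin n} {w : Vec2}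
    (h : ShortCycle V p w) : |w.1| ≤ n * M ∧ |w.2| ≤ n * M := by
  obtain ⟨γ, -, hl, hw, rfl⟩ := h
  have := hw.abs_effect_le hM
  have h2 : (γ.length : ℤ) * M ≤ n * M := by gcongr
  exact ⟨this.1.trans h2, this.2.trans h2⟩

/-- If no short cycle at a visited state increases a linear form, then the linear form
increases only by a bounded amount. -/
lemma Walk.lin_vecAt_le {M : ℕ} (hM : NormLE V M) {p q : Fin n} {π : List (Transition n)}
    (h : Walk V p π q) (u : Vec2) {i j : ℕ} (hij : i ≤ j) (hj : j ≤ π.length) (α β : ℤ)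
    (hc : ∀ k, i ≤ k → k < j → ∀ w, ShortCycle V (stateAt π p k) w → lin α β w ≤ 0) :
    lin α β (vecAt π u j) ≤ lin α β (vecAt π u i) + n * (M * (|α| + |β|)) := by
  obtain ⟨π', h1, h2, h3⟩ := (h.seg hij).exists_short (lin α β)
    (fun r => ∃ k, i ≤ k ∧ k < j ∧ r = stateAt π p k) (fun t ht => h.mem_seg hj ht)
    (by
      rintro r γ ⟨k, hk1, hk2, rfl⟩ h0 hl hw
      exact hc k hk1 hk2 _ ⟨γ, h0, hl, hw, rfl⟩)
  have h4 := h1.lin_effect_le hM α β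
  have h5 : (π'.length : ℤ) * (M * (|α| + |β|)) ≤ n * (M * (|α| + |β|)) := by gcongr
  rw [← vecAt_add_effect_seg π u hij, map_add]
  linarith

lemma Walk.step_le {M : ℕ} (hM : NormLE V M) {p q : Fin n} {π : List (Transition n)}
    (h : Walk V p π q) (u : Vec2) {i : ℕ} (hi : i < π.length) (α β : ℤ) :
    lin α β (vecAt π u (i + 1)) ≤ lin α β (vecAt π u i) + M * (|α| + |β|) := by
  have h1 := (h.seg (Nat.le_succ i)).lin_effect_le hM α β
  rw [seg_length (by omega)] at h1
  rw [← vecAt_add_effect_seg π u (Nat.le_succ i), map_add]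
  simp at h1
  linarith

lemma Walk.proj_step_le {M : ℕ} (hM : NormLE V M) {p q : Fin n} {π : List (Transition n)}
    (h : Walk V p π q) (u : Vec2) {i : ℕ} (hi : i < π.length) (j : Fin 2) :
    proj j (vecAt π u (i + 1)) ≤ proj j (vecAt π u i) + M := by
  have h1 := h.step_le hM u hi 1 0
  have h2 := h.step_le hM u hi 0 1
  simp [lin_apply] at h1 h2
  unfold proj; split <;> assumption

/-- A part of a run that returns to the same state with a larger vector yields a short enabled
semi-positive cycle. -/
lemma Walk.semiPosCycle {p q : Fin n} {π : List (Transition n)} (h : Walk V p π q)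
    (u : Vec2) {i j H : ℕ} (hij : i ≤ j) (hj : j ≤ π.length)
    (hb : ∀ k, i ≤ k → k ≤ j →
      0 ≤ vecAt π u k ∧ (vecAt π u k).1 ≤ (H : ℤ) ∧ (vecAt π u k).2 ≤ (H : ℤ))
    (hst : stateAt π p i = stateAt π p j) (hsp : SemiPos (vecAt π u j - vecAt π u i)) :
    SemiPosCycle V (n * (H + 1) ^ 2) (stateAt π p i) (vecAt π u i) := by
  obtain ⟨π', h1, h2, h3, h4⟩ := (h.seg hij).exists_short_run (vecAt π u i) H (by
    intro k hk
    rw [seg_length hj] at hk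
    rw [vecAt_seg π u (by omega)]
    exact hb _ (by omega) (by omega))
  refine ⟨π', by rwa [← hst] at h1, h2, ?_, h4⟩
  rw [h3]
  rwa [← vecAt_add_effect_seg π u hij, add_sub_cancel_left] at hsp

/-- A sequence with bounded increments that never increases between two times with the same key
increases only by a bounded amount. -/
lemma le_of_no_increase {κ : Type*} [DecidableEq κ] (K : Finset κ) (key : ℕ → κ) (y : ℕ → ℤ)
    (M : ℕ) {s t : ℕ} (hst : s ≤ t) (hk : ∀ i, s ≤ i → i ≤ t → key i ∈ K)
    (hstep : ∀ i, s ≤ i → i < t → y (i + 1) ≤ y i + M)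
    (hno : ∀ i j, s ≤ i → i < j → j ≤ t → key i = key j → y j ≤ y i) :
    y t ≤ y s + M * K.card := by
  induction hc : K.card using Nat.strong_induction_on generalizing K s with
  | _ c ih =>
  obtain ⟨s', hs'⟩ : ∃ s', s' = Nat.findGreatest (fun i => key i = key s) t := ⟨_, rfl⟩
  have h1 : s ≤ s' := hs' ▸ Nat.le_findGreatest hst rfl
  have h2 : key s' = key s := by
    have := Nat.findGreatest_spec (P := fun i => key i = key s) hst rfl
    rwa [← hs'] at this
  have h3 : s' ≤ t := hs' ▸ Nat.findGreatest_le t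
  have h4 : y s' ≤ y s := by
    rcases h1.eq_or_lt with h | h
    · rw [← h]
    · exact hno s s' le_rfl h h3 h2.symm
  have hmem := hk s le_rfl hst
  have hcpos : 0 < K.card := Finset.card_pos.2 ⟨_, hmem⟩
  rcases h3.eq_or_lt with h | h
  · rw [← h]
    have : (0 : ℤ) ≤ M * c := by positivity
    linarith
  · have h5 := hstep s' h1 h
    have h6 := ih (K.erase (key s)).card
      (by rw [Finset.card_erase_of_mem hmem]; omega) (s := s' + 1) (K.erase (key s)) h
      (fun i hi1 hi2 => Finset.mem_erase.2 ⟨fun he =>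
        Nat.findGreatest_is_greatest (P := fun i => key i = key s) (by omega) hi2 he,
        hk i (by omega) hi2⟩)
      (fun i hi1 hi2 => hstep i (by omega) hi2)
      (fun i j hi hij hj => hno i j (by omega) hij hj) rfl
    rw [Finset.card_erase_of_mem hmem] at h6
    push_cast [Nat.cast_sub hcpos] at h6
    rw [hc] at h6
    linarith

/-- If no short semi-positive cycle is enabled along a run that stays in a strip, then the
unrestricted coordinate increases only by a bounded amount. -/
lemma Walk.proj_le_of_strip {M : ℕ} (hM : NormLE V M) {p q : Fin n} {π : List (Transition n)}
    (h : Walk V p π q) (u : Vec2) {s t H D L : ℕ} (hst : s ≤ t) (ht : t ≤ π.length)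
    (hb : ∀ k, s ≤ k → k ≤ t →
      0 ≤ vecAt π u k ∧ (vecAt π u k).1 ≤ (H : ℤ) ∧ (vecAt π u k).2 ≤ (H : ℤ))
    (hL : n * (H + 1) ^ 2 ≤ L)
    (hno : ∀ k, s ≤ k → k ≤ t → ¬ SemiPosCycle V L (stateAt π p k) (vecAt π u k))
    {j k : Fin 2} (hjk : j ≠ k) (hD : ∀ i, s ≤ i → i ≤ t → proj j (vecAt π u i) ≤ D) :
    proj k (vecAt π u t) ≤ proj k (vecAt π u s) + M * (n * (D + 1)) := by
  have hpos : ∀ i, s ≤ i → i ≤ t → 0 ≤ proj j (vecAt π u i) := fun i h1 h2 => by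
    have := (hb i h1 h2).1
    unfold proj; split
    · exact this.1
    · exact this.2
  have := le_of_no_increase (Finset.univ ×ˢ Finset.range (D + 1))
    (fun i => ((stateAt π p i, (proj j (vecAt π u i)).toNat) : Fin n × ℕ))
    (fun i => proj k (vecAt π u i)) M hst
    (fun i h1 h2 => by
      have := hD i h1 h2
      simp; omega)
    (fun i h1 h2 => h.proj_step_le hM u (by omega) k)
    (by
      intro i i' h1 h2 h3 he
      by_contra hlt
      push Not at hlt
      simp only [Prod.mk.injEq] at he
      have e1 := hpos i h1 (by omega)
      have e2 := hpos i' (by omega) h3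
      have e3 : proj j (vecAt π u i) = proj j (vecAt π u i') := by omega
      obtain ⟨γ, g1, g2, g3, g4⟩ := h.semiPosCycle u h2.le (by omega)
        (fun k hk1 hk2 => hb k (by omega) (by omega)) he.1 (by
          unfold proj at hlt e3
          unfold SemiPos
          simp only [Prod.fst_sub, Prod.snd_sub]
          fin_cases j <;> fin_cases k <;> simp at hjk hlt e3 ⊢ <;> omega)
      exact hno i h1 (by omega) ⟨γ, g1, g2.trans hL, g3, g4⟩)
  simpa using this

end Runs

/-! ### Growth inside a strongly connected component -/

/-- Control state `r` is reachable from `p`. -/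
def Reach {n : ℕ} (V : VASS n) (p r : Fin n) : Prop := ∃ π, Walk V p π r

lemma nsmul_fst (k : ℕ) (v : Vec2) : (k • v).1 = k * v.1 := by
  rw [Prod.smul_fst, nsmul_eq_mul]

lemma nsmul_snd (k : ℕ) (v : Vec2) : (k • v).2 = k * v.2 := by
  rw [Prod.smul_snd, nsmul_eq_mul]

/-- Either two vectors of a bounded set have a small positive combination, or a small nonzero
nonnegative linear form is nonpositive on the whole set. -/
lemma exists_pos_combination_or_form (W : Set Vec2) {N : ℕ} (hN : 1 ≤ N)
    (hW : ∀ w ∈ W, |w.1| ≤ (N : ℤ) ∧ |w.2| ≤ (N : ℤ)) :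
    (∃ w ∈ W, ∃ w' ∈ W, ∃ a b : ℕ, a ≤ 2 * N ∧ b ≤ 2 * N ∧ Pos (a • w + b • w')) ∨
    (∃ α β : ℤ, 0 ≤ α ∧ 0 ≤ β ∧ α ≤ N ∧ β ≤ N ∧ (0 < α ∨ 0 < β) ∧
      ∀ w ∈ W, lin α β w ≤ 0) := by
  by_cases hp : ∃ w ∈ W, Pos w
  · obtain ⟨w, hw, h⟩ := hp
    exact Or.inl ⟨w, hw, w, hw, 1, 0, by omega, by omega, by simpa using h⟩
  push Not at hp
  unfold Pos at hp
  by_cases h1 : ∀ w ∈ W, w.1 ≤ 0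
  · exact Or.inr ⟨1, 0, by simp, by simp, by omega, by simp, by simp,
      fun w hw => by simpa [lin_apply] using h1 w hw⟩
  push Not at h1
  have hfin : W.Finite := (Set.finite_Icc ((-N, -N) : ℤ × ℤ) (N, N)).subset fun w hw => by
    have := hW w hw
    rw [abs_le, abs_le] at this
    exact ⟨⟨this.1.1, this.2.1⟩, ⟨this.1.2, this.2.2⟩⟩
  obtain ⟨w, ⟨hw, hw1⟩, hmax⟩ := Set.exists_max_image {w ∈ W | 0 < w.1}
    (fun w => (w.2 : ℚ) / w.1) (hfin.subset (Set.sep_subset _ _)) h1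
  have hw2 : w.2 ≤ 0 := by
    by_contra h
    exact hp w hw ⟨hw1, by omega⟩
  have hbw := hW w hw
  rw [abs_le, abs_le] at hbw
  by_cases h2 : ∃ w' ∈ W, w'.1 ≤ 0 ∧ 0 < w'.2 ∧ 0 < w.1 * w'.2 - w.2 * w'.1
  · obtain ⟨w', hw', e1, e2, e3⟩ := h2
    have hbw' := hW w' hw'
    rw [abs_le, abs_le] at hbw'
    refine Or.inl ⟨w, hw, w', hw', (w'.2 - w'.1).toNat, (w.1 - w.2).toNat, by omega, by omega, ?_⟩
    have t1 : ((w'.2 - w'.1).toNat : ℤ) = w'.2 - w'.1 := Int.toNat_of_nonneg (by omega)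
    have t2 : ((w.1 - w.2).toNat : ℤ) = w.1 - w.2 := Int.toNat_of_nonneg (by omega)
    constructor
    · simp only [Prod.fst_add, nsmul_fst]
      rw [t1, t2]; linarith
    · simp only [Prod.snd_add, nsmul_snd]
      rw [t1, t2]; linarith
  · push Not at h2
    refine Or.inr ⟨-w.2, w.1, by omega, by omega, by omega, by omega, Or.inr hw1, ?_⟩
    intro v hv
    rw [lin_apply]
    rcases lt_or_ge 0 v.1 with hv1 | hv1
    · have := hmax v ⟨hv, hv1⟩
      rw [div_le_div_iff₀ (by exact_mod_cast hv1) (by exact_mod_cast hw1)] at this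
      have : v.2 * w.1 ≤ w.2 * v.1 := by exact_mod_cast this
      linarith
    · rcases lt_or_ge 0 v.2 with hv2 | hv2
      · have := h2 v hv hv1 hv2
        linarith
      · have e1 := mul_nonneg_of_nonpos_of_nonpos hw2 hv1
        have e2 := mul_nonpos_of_nonneg_of_nonpos hw1.le hv2
        linarith

section Components

variable {n : ℕ} {V : VASS n}

lemma Reach.exists_short {p r : Fin n} (h : Reach V p r) :
    ∃ π, Walk V p π r ∧ π.length ≤ n := by
  obtain ⟨π, hπ⟩ := h
  obtain ⟨π', h1, h2, -⟩ := hπ.exists_short 0 (fun _ => True) (by simp) (by simp)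
  exact ⟨π', h1, h2⟩

lemma Walk.exists_iterate {p : Fin n} {γ : List (Transition n)} (h : Walk V p γ p) (k : ℕ) :
    ∃ γ', Walk V p γ' p ∧ γ'.length = k * γ.length ∧ effect γ' = k • effect γ := by
  induction k with
  | zero => exact ⟨[], rfl, by simp, by simp [effect]⟩
  | succ k ih =>
    obtain ⟨γ', h1, h2, h3⟩ := ih
    exact ⟨γ' ++ γ, h1.append h, by simp [h2]; ring, by rw [effect_append, h3, succ_nsmul]⟩

/-- Two cycles with a positive combination, in the strongly connected component of `p`, yield a
cycle of positive effect at `p`. -/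
lemma exists_pos_cycle {M N : ℕ} (hM : NormLE V M) (hN : N = n * M) {p p₁ p₂ : Fin n}
    (h1 : Reach V p p₁) (h2 : Reach V p₁ p₂) (h3 : Reach V p₂ p) {w w' : Vec2}
    (hw : ShortCycle V p₁ w) (hw' : ShortCycle V p₂ w') {a b : ℕ} (ha : a ≤ 2 * N)
    (hb : b ≤ 2 * N) (hpos : Pos (a • w + b • w')) :
    ∃ γ, Walk V p γ p ∧ γ.length ≤ 3 * n + (3 * N + 1) * (4 * N) * n ∧ Pos (effect γ) := by
  obtain ⟨c₁, w1, l1⟩ := h1.exists_short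
  obtain ⟨c₂, w2, l2⟩ := h2.exists_short
  obtain ⟨c₃, w3, l3⟩ := h3.exists_short
  obtain ⟨γ, -, hl, hγ, rfl⟩ := hw
  obtain ⟨γ', -, hl', hγ', rfl⟩ := hw'
  obtain ⟨δ, d1, d2, d3⟩ := hγ.exists_iterate ((3 * N + 1) * a)
  obtain ⟨δ', d1', d2', d3'⟩ := hγ'.exists_iterate ((3 * N + 1) * b)
  refine ⟨c₁ ++ (δ ++ (c₂ ++ (δ' ++ c₃))), w1.append (d1.append (w2.append (d1'.append w3))),
    ?_, ?_⟩
  · simp only [List.length_append, d2, d2']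
    have e1 : (3 * N + 1) * a * γ.length ≤ (3 * N + 1) * (2 * N) * n := by gcongr
    have e2 : (3 * N + 1) * b * γ'.length ≤ (3 * N + 1) * (2 * N) * n := by gcongr
    calc _ ≤ n + ((3 * N + 1) * (2 * N) * n + (n + ((3 * N + 1) * (2 * N) * n + n))) := by omega
      _ = _ := by ring
  · have b1 := w1.abs_effect_le hM
    have b2 := w2.abs_effect_le hM
    have b3 := w3.abs_effect_le hM
    have hle : ∀ k : ℕ, k ≤ n → (k : ℤ) * M ≤ N := fun k hk => by
      rw [hN]; push_cast; gcongr
    have k1 := hle _ l1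
    have k2 := hle _ l2
    have k3 := hle _ l3
    simp only [abs_le] at b1 b2 b3
    obtain ⟨q1, q2⟩ := hpos
    simp only [effect_append, d3, d3', Pos]
    simp only [Prod.fst_add, Prod.snd_add, nsmul_fst, nsmul_snd] at *
    push_cast
    constructor
    · nlinarith
    · nlinarith

lemma Walk.le_proj_step {M : ℕ} (hM : NormLE V M) {p q : Fin n} {π : List (Transition n)}
    (h : Walk V p π q) (u : Vec2) {i : ℕ} (hi : i < π.length) (j : Fin 2) :
    proj j (vecAt π u i) ≤ proj j (vecAt π u (i + 1)) + M := by
  have h1 := h.step_le hM u hi (-1) 0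
  have h2 := h.step_le hM u hi 0 (-1)
  simp [lin_apply] at h1 h2
  unfold proj; split <;> linarith

/-- A run along which at each time one of the coordinates is small stays close to its source,
unless a short semi-positive cycle is enabled. -/
lemma Walk.proj_le_of_hook {M : ℕ} (hM : NormLE V M) {p q : Fin n} {π : List (Transition n)}
    (h : Walk V p π q) (u : Vec2) {s t H D B L : ℕ} (hst : s ≤ t) (ht : t ≤ π.length)
    (hb : ∀ k, s ≤ k → k ≤ t →
      0 ≤ vecAt π u k ∧ (vecAt π u k).1 ≤ (H : ℤ) ∧ (vecAt π u k).2 ≤ (H : ℤ))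
    (hL : n * (H + 1) ^ 2 ≤ L)
    (hno : ∀ k, s ≤ k → k ≤ t → ¬ SemiPosCycle V L (stateAt π p k) (vecAt π u k))
    {j k : Fin 2} (hjk : j ≠ k)
    (hB : proj j (vecAt π u s) ≤ B ∧ proj k (vecAt π u s) ≤ B)
    (hD : ∀ i, s ≤ i → i ≤ t → proj j (vecAt π u i) < D ∨ proj k (vecAt π u i) < D) :
    proj k (vecAt π u t) ≤ B + D + M + M + M * (n * (D + 1)) := by
  classical
  by_contra hlt
  push Not at hlt
  have hMn : (0 : ℤ) ≤ M * (n * (D + 1)) := by positivity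
  obtain ⟨R, hR⟩ : ∃ R : ℤ, R = B + D + M := ⟨_, rfl⟩
  let P : ℕ → Prop := fun i => proj j (vecAt π u i) ≤ R ∧ proj k (vecAt π u i) ≤ R
  have hPs : P s := ⟨by omega, by omega⟩
  obtain ⟨s', hs'⟩ : ∃ s', s' = Nat.findGreatest P t := ⟨_, rfl⟩
  have h1 : s ≤ s' := hs' ▸ Nat.le_findGreatest hst hPs
  have h2 : P s' := hs' ▸ Nat.findGreatest_spec (P := P) hst hPs
  have h3 : s' ≤ t := hs' ▸ Nat.findGreatest_le t
  have h4 : s' < t := by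
    refine lt_of_le_of_ne h3 fun he => ?_
    have := h2.2
    rw [he] at this
    omega
  have h5 : ∀ i, s' < i → i ≤ t → ¬ P i := fun i hi1 hi2 =>
    Nat.findGreatest_is_greatest (hs' ▸ hi1) hi2
  have h6 : ∀ d, s' + 1 + d ≤ t → R < proj k (vecAt π u (t - d)) := by
    intro d
    induction d with
    | zero => intro _; simp only [Nat.sub_zero]; omega
    | succ d ih =>
      intro hd
      have e1 := ih (by omega)
      have e2 := hD (t - d) (by omega) (by omega)
      have e3 := h.le_proj_step hM u (i := t - (d + 1)) (by omega) j
      rw [show t - (d + 1) + 1 = t - d by omega] at e3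
      have e4 := h5 (t - (d + 1)) (by omega) (by omega)
      by_contra hc
      exact e4 ⟨by omega, by omega⟩
  have h7 : ∀ i, s' + 1 ≤ i → i ≤ t → proj j (vecAt π u i) ≤ D := by
    intro i hi1 hi2
    have e1 := h6 (t - i) (by omega)
    rw [show t - (t - i) = i by omega] at e1
    have e2 := hD i (by omega) hi2
    omega
  have h8 := h.proj_le_of_strip hM u (s := s' + 1) h4 ht
    (fun k hk1 hk2 => hb k (by omega) hk2) hL (fun k hk1 hk2 => hno k (by omega) hk2) hjk h7
  have h9 := h.proj_step_le hM u (i := s') (by omega) k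
  have := h2.2
  omega

/-- Inside a strongly connected component, a run grows at most by a polynomial factor, unless a
short semi-positive cycle is enabled. -/
lemma Walk.le_of_component {M N : ℕ} (hM : NormLE V M) (hN : N = n * M) (hM1 : 1 ≤ M)
    {p q : Fin n} {π : List (Transition n)}
    (h : Walk V p π q) (u : Vec2) {s t H B L : ℕ} (hst : s ≤ t) (ht : t ≤ π.length)
    (hb : ∀ k, s ≤ k → k ≤ t →
      0 ≤ vecAt π u k ∧ (vecAt π u k).1 ≤ (H : ℤ) ∧ (vecAt π u k).2 ≤ (H : ℤ))
    (hL : n * (H + 1) ^ 2 ≤ L) (hL' : 3 * n + (3 * N + 1) * (4 * N) * n ≤ L)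
    (hno : ∀ k, s ≤ k → k ≤ t → ¬ SemiPosCycle V L (stateAt π p k) (vecAt π u k))
    (hB : (vecAt π u s).1 ≤ B ∧ (vecAt π u s).2 ≤ B)
    (hscc : ∀ k k', s ≤ k → k ≤ t → s ≤ k' → k' ≤ t →
      Reach V (stateAt π p k) (stateAt π p k')) (j : Fin 2) :
    proj j (vecAt π u t) ≤ 100 * N ^ 5 * (B + 1) := by
  have hn : 1 ≤ n := Fin.pos p
  have hN1 : 1 ≤ N := by rw [hN]; exact Nat.mul_pos hn hM1
  have hMN : M ≤ N := by rw [hN]; exact Nat.le_mul_of_pos_left _ hn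
  have hNz : (N : ℤ) = n * M := by rw [hN]; push_cast; ring
  have hN1z : (1 : ℤ) ≤ N := by exact_mod_cast hN1
  have pw : ∀ k ∈ ({1, 2, 3, 4} : Finset ℕ), (N : ℤ) ^ k ≤ N ^ 5 := fun k hk =>
    pow_le_pow_right₀ hN1z (by simp at hk; omega)
  have pw1 := pw 1 (by simp)
  have pw2 := pw 2 (by simp)
  have pw3 := pw 3 (by simp)
  have pw4 := pw 4 (by simp)
  have pw0 : (1 : ℤ) ≤ N ^ 5 := one_le_pow₀ hN1z
  have hBN : (B : ℤ) ≤ N ^ 5 * B := le_mul_of_one_le_left (by positivity) pw0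
  have hNB : (N : ℤ) * B ≤ N ^ 5 * B := by
    rw [pow_one] at pw1; gcongr
  rw [pow_one] at pw1
  have htarget : 100 * (N : ℤ) ^ 5 * (B + 1) = 100 * (N ^ 5 * B) + 100 * N ^ 5 := by ring
  rw [htarget]
  have hNB0 : (0 : ℤ) ≤ N ^ 5 * B := by positivity
  have hprojB : ∀ j, proj j (vecAt π u s) ≤ B := fun j => by
    unfold proj; split
    exacts [hB.1, hB.2]
  rcases exists_pos_combination_or_form
    {w | ∃ k, s ≤ k ∧ k ≤ t ∧ ShortCycle V (stateAt π p k) w} hN1 (by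
      rintro w ⟨k, -, -, hw⟩
      rw [hNz]
      exact hw.abs_le hM) with hpos | ⟨α, β, hα, hβ, hαN, hβN, hαβ, hform⟩
  · obtain ⟨w, ⟨k₁, a1, a2, a3⟩, w', ⟨k₂, b1, b2, b3⟩, a, b, ha, hbb, hpos⟩ := hpos
    obtain ⟨D, hD⟩ : ∃ D : ℕ, D = (3 * n + (3 * N + 1) * (4 * N) * n) * M := ⟨_, rfl⟩
    have key : ∀ i, s ≤ i → i ≤ t →
        (vecAt π u i).1 < D ∨ (vecAt π u i).2 < D := by
      intro i hi1 hi2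
      by_contra hc
      push Not at hc
      obtain ⟨γ, g1, g2, g3⟩ := exists_pos_cycle hM hN (hscc i k₁ hi1 hi2 a1 a2)
        (hscc k₁ k₂ a1 a2 b1 b2) (hscc k₂ i b1 b2 hi1 hi2) a3 b3 ha hbb hpos
      refine hno i hi1 hi2 ⟨γ, g1, g2.trans hL', ⟨g3.1.le, g3.2.le, Or.inl g3.1⟩, ?_⟩
      intro l hl
      have e := (g1.take l).abs_effect_le hM
      have e2 : ((γ.take l).length : ℤ) * M ≤ D := by
        rw [hD]; push_cast
        gcongr
        have : (γ.take l).length ≤ 3 * n + (3 * N + 1) * (4 * N) * n := by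
          rw [List.length_take]; omega
        exact_mod_cast this
      simp only [abs_le] at e
      constructor
      · simp only [vecAt, Prod.fst_zero, Prod.fst_add] at *
        linarith
      · simp only [vecAt, Prod.snd_zero, Prod.snd_add] at *
        linarith
    have hjk : (1 - j) ≠ j := by fin_cases j <;> simp
    have := h.proj_le_of_hook hM u hst ht hb hL hno hjk ⟨hprojB _, hprojB _⟩ (D := D) (by
      intro i hi1 hi2
      have := key i hi1 hi2
      unfold proj
      fin_cases j <;> simp <;> tauto)
    have hDz : (D : ℤ) = 3 * N + 4 * N ^ 2 + 12 * N ^ 3 := by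
      rw [hD, hNz]; push_cast; rw [hNz]; ring
    have hND : (M : ℤ) * (n * (D + 1)) = N * (D + 1) := by rw [hNz]; ring
    have hMNz : (M : ℤ) ≤ N := by exact_mod_cast hMN
    have hexp : (N : ℤ) * (3 * N + 4 * N ^ 2 + 12 * N ^ 3 + 1) =
        N + 3 * N ^ 2 + 4 * N ^ 3 + 12 * N ^ 4 := by ring
    rw [hND, hDz, hexp] at this
    linarith
  · have hlin : ∀ i, s ≤ i → i ≤ t →
        lin α β (vecAt π u i) ≤ lin α β (vecAt π u s) + n * (M * (α + β)) := by
      intro i hi1 hi2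
      have := h.lin_vecAt_le hM u hi1 (hi2.trans ht) α β
        (fun k hk1 hk2 w hw => hform w ⟨k, hk1, by omega, hw⟩)
      rwa [abs_of_nonneg hα, abs_of_nonneg hβ] at this
    have hnn : ∀ i, s ≤ i → i ≤ t → ∀ j, 0 ≤ proj j (vecAt π u i) := fun i h1 h2 j => by
      have := (hb i h1 h2).1
      unfold proj; split
      exacts [this.1, this.2]
    rcases hα.eq_or_lt with h0 | hα1
    · subst h0
      have βpos : 0 < β := by simpa using hαβ
      have hstrip : ∀ i, s ≤ i → i ≤ t → proj 1 (vecAt π u i) ≤ ((B + N : ℕ) : ℤ) := by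
        intro i hi1 hi2
        have e := hlin i hi1 hi2
        simp only [lin_apply, zero_mul, zero_add] at e
        have e2 : β * (vecAt π u s).2 ≤ β * B := by gcongr; exact hB.2
        have e3 : (n : ℤ) * (M * β) = β * N := by rw [hNz]; ring
        refine le_of_mul_le_mul_left (a := β) ?_ βpos
        push_cast
        simp only [proj, one_ne_zero, if_false]
        linarith
      have h1 := h.proj_le_of_strip hM u hst ht hb hL hno (show (1 : Fin 2) ≠ 0 by simp)
        hstrip
      have e0 := hprojB 0
      have e1 := hstrip t hst le_rfl
      have hND : (M : ℤ) * (n * (((B + N : ℕ) : ℤ) + 1)) = N * B + N ^ 2 + N := by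
        rw [hNz]; push_cast; rw [hNz]; ring
      rw [hND] at h1
      push_cast at e1
      have : j = 0 ∨ j = 1 := by fin_cases j <;> simp
      rcases this with rfl | rfl <;> linarith
    rcases hβ.eq_or_lt with h0 | hβ1
    · subst h0
      have αpos : 0 < α := hα1
      have hstrip : ∀ i, s ≤ i → i ≤ t → proj 0 (vecAt π u i) ≤ ((B + N : ℕ) : ℤ) := by
        intro i hi1 hi2
        have e := hlin i hi1 hi2
        simp only [lin_apply, zero_mul, add_zero] at e
        have e2 : α * (vecAt π u s).1 ≤ α * B := by gcongr; exact hB.1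
        have e3 : (n : ℤ) * (M * α) = α * N := by rw [hNz]; ring
        refine le_of_mul_le_mul_left (a := α) ?_ αpos
        push_cast
        simp only [proj, if_true]
        linarith
      have h1 := h.proj_le_of_strip hM u hst ht hb hL hno (show (0 : Fin 2) ≠ 1 by simp)
        hstrip
      have e0 := hprojB 1
      have e1 := hstrip t hst le_rfl
      have hND : (M : ℤ) * (n * (((B + N : ℕ) : ℤ) + 1)) = N * B + N ^ 2 + N := by
        rw [hNz]; push_cast; rw [hNz]; ring
      rw [hND] at h1
      push_cast at e1
      have : j = 0 ∨ j = 1 := by fin_cases j <;> simp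
      rcases this with rfl | rfl <;> linarith
    · have h1 := hlin t hst le_rfl
      have h2 := hnn t hst le_rfl
      simp only [lin_apply] at h1
      have x1 : 0 ≤ (vecAt π u t).1 := h2 0
      have x2 : 0 ≤ (vecAt π u t).2 := h2 1
      have f1 : (vecAt π u t).1 ≤ α * (vecAt π u t).1 := le_mul_of_one_le_left x1 hα1
      have f2 : (vecAt π u t).2 ≤ β * (vecAt π u t).2 := le_mul_of_one_le_left x2 hβ1
      have g1 : α * (vecAt π u s).1 ≤ N * B := by
        calc _ ≤ α * B := by gcongr; exact hB.1
          _ ≤ _ := by gcongr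
      have g2 : β * (vecAt π u s).2 ≤ N * B := by
        calc _ ≤ β * B := by gcongr; exact hB.2
          _ ≤ _ := by gcongr
      have g3 : (n : ℤ) * (M * (α + β)) ≤ 2 * N ^ 2 := by
        calc (n : ℤ) * (M * (α + β)) = N * (α + β) := by rw [hNz]; ring
          _ ≤ N * (N + N) := by gcongr
          _ = _ := by ring
      have hle : proj j (vecAt π u t) ≤ (vecAt π u t).1 + (vecAt π u t).2 := by
        unfold proj; split <;> linarith
      linarith

end Components

/-! ### Finding a semi-positive cycle -/

section Growth

variable {n : ℕ} {V : VASS n}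

lemma Reach.trans {p q r : Fin n} (h : Reach V p q) (h' : Reach V q r) : Reach V p r := by
  obtain ⟨a, ha⟩ := h
  obtain ⟨b, hb⟩ := h'
  exact ⟨a ++ b, ha.append hb⟩

/-- The number of control states reachable from `p`. -/
noncomputable def reachCount (V : VASS n) (p : Fin n) : ℕ := {r | Reach V p r}.ncard

lemma reachCount_le (p : Fin n) : reachCount V p ≤ n := by
  have := Set.ncard_le_card {r | Reach V p r}
  simpa [reachCount] using this

lemma reachCount_pos (p : Fin n) : 0 < reachCount V p :=
  (Set.ncard_pos (Set.toFinite _)).2 ⟨p, [], rfl⟩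

lemma Reach.reachCount_le {p q : Fin n} (h : Reach V p q) :
    reachCount V q ≤ reachCount V p :=
  Set.ncard_le_ncard (fun _ hr => h.trans hr) (Set.toFinite _)

lemma Reach.symm_of_reachCount {p q : Fin n} (h : Reach V p q)
    (he : reachCount V p ≤ reachCount V q) : Reach V q p := by
  have := Set.eq_of_subset_of_ncard_le (s := {r | Reach V q r}) (t := {r | Reach V p r})
    (fun _ hr => h.trans hr) he (Set.toFinite _)
  have hp : p ∈ {r | Reach V p r} := ⟨[], rfl⟩
  rwa [← this] at hp

/-- Unless a short semi-positive cycle is enabled early, a run from `0` stays small. -/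
lemma Walk.proj_le_pow {M N L H P : ℕ} (hM : NormLE V M) (hN : N = n * M) (hM1 : 1 ≤ M)
    {p q : Fin n} {π : List (Transition n)} (h : Walk V p π q)
    (hnn : ∀ i ≤ π.length, 0 ≤ vecAt π 0 i) (hP : P = 400 * N ^ 6) (hH : H = P ^ n + M)
    (hL : n * (H + 1) ^ 2 ≤ L) (hL' : 3 * n + (3 * N + 1) * (4 * N) * n ≤ L)
    (hno : ∀ k ≤ π.length, (∀ i ≤ k, ∀ j, proj j (vecAt π 0 i) ≤ H) →
      ¬ SemiPosCycle V L (stateAt π p k) (vecAt π 0 k)) :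
    ∀ t ≤ π.length, ∀ j,
      proj j (vecAt π 0 t) ≤ (P : ℤ) ^ (n - reachCount V (stateAt π p t) + 1) := by
  intro t
  have hn : 1 ≤ n := Fin.pos p
  have hN1 : 1 ≤ N := by rw [hN]; exact Nat.mul_pos hn hM1
  have hMN : M ≤ N := by rw [hN]; exact Nat.le_mul_of_pos_left _ hn
  have hP1 : 1 ≤ P := by rw [hP]; have := Nat.pow_pos (n := 6) hN1; omega
  have hPz : (1 : ℤ) ≤ P := by exact_mod_cast hP1
  have hproj0 : ∀ j, proj j (vecAt π 0 0) = 0 := fun j => by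
    rw [vecAt_zero]; unfold proj; split <;> rfl
  have hreach : ∀ k k', k ≤ k' → Reach V (stateAt π p k) (stateAt π p k') :=
    fun k k' hk => ⟨_, h.seg hk⟩
  induction t using Nat.strong_induction_on with
  | _ t ih =>
  intro ht
  have hlt : ∀ i < t, ∀ j, proj j (vecAt π 0 i) ≤ (P : ℤ) ^ n := fun i hi j =>
    (ih i hi (by omega) j).trans (pow_le_pow_right₀ hPz (by
      have := reachCount_pos (V := V) (stateAt π p i)
      omega))
  have hHz : (H : ℤ) = (P : ℤ) ^ n + M := by rw [hH]; push_cast; ring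
  have hle : ∀ i ≤ t, ∀ j, proj j (vecAt π 0 i) ≤ H := by
    intro i hi j
    rcases i with _ | i
    · rw [hproj0]; positivity
    · have h1 := h.proj_step_le hM 0 (i := i) (by omega) j
      have h2 := hlt i (by omega) j
      omega
  obtain ⟨r, hr⟩ : ∃ r, r = reachCount V (stateAt π p t) := ⟨_, rfl⟩
  rw [← hr]
  have hex : ∃ s, reachCount V (stateAt π p s) ≤ r := ⟨t, hr.ge⟩
  classical
  obtain ⟨s, hs⟩ : ∃ s, s = Nat.find hex := ⟨_, rfl⟩
  have hs1 : reachCount V (stateAt π p s) ≤ r := hs ▸ Nat.find_spec hex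
  have hst : s ≤ t := hs ▸ Nat.find_min' hex hr.ge
  have hB : ∀ j, proj j (vecAt π 0 s) ≤ ((P ^ (n - r) + M : ℕ) : ℤ) := by
    intro j
    rcases Nat.eq_zero_or_pos s with h0 | h0
    · rw [h0, hproj0]; positivity
    · obtain ⟨s₀, rfl⟩ := Nat.exists_eq_succ_of_ne_zero h0.ne'
      have h1 := h.proj_step_le hM 0 (i := s₀) (by omega) j
      have h2 := ih s₀ (by omega) (by omega) j
      have h3 : ¬ reachCount V (stateAt π p s₀) ≤ r := Nat.find_min hex (by omega)
      have h4 := reachCount_le (V := V) (stateAt π p s₀)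
      have h5 : (P : ℤ) ^ (n - reachCount V (stateAt π p s₀) + 1) ≤ (P : ℤ) ^ (n - r) :=
        pow_le_pow_right₀ hPz (by omega)
      push_cast
      simp only [Nat.succ_eq_add_one]
      omega
  have hback : ∀ k, s ≤ k → k ≤ t → Reach V (stateAt π p k) (stateAt π p s) := by
    intro k hk1 hk2
    refine (hreach s k hk1).symm_of_reachCount (hs1.trans ?_)
    rw [hr]
    exact (hreach k t hk2).reachCount_le
  intro j
  have key := h.le_of_component hM hN hM1 0 hst ht
    (fun k hk1 hk2 => ⟨hnn k (by omega), hle k hk2 0, hle k hk2 1⟩) hL hL'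
    (fun k hk1 hk2 => hno k (by omega) (fun i hi => hle i (by omega))) ⟨hB 0, hB 1⟩
    (fun k k' hk1 hk2 hk3 hk4 => (hback k hk1 hk2).trans (hreach s k' hk3)) j
  refine key.trans ?_
  have e1 : P ^ (n - r) + M + 1 ≤ 3 * N * P ^ (n - r) := by
    have : 1 ≤ P ^ (n - r) := Nat.one_le_pow _ _ hP1
    nlinarith
  have e2 : 100 * N ^ 5 * (P ^ (n - r) + M + 1) ≤ P ^ (n - r + 1) := by
    calc _ ≤ 100 * N ^ 5 * (3 * N * P ^ (n - r)) := by gcongr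
      _ = 300 * N ^ 6 * P ^ (n - r) := by ring
      _ ≤ 400 * N ^ 6 * P ^ (n - r) := by gcongr; norm_num
      _ = _ := by rw [← hP]; ring
  exact_mod_cast e2

/-- A run from `0` that reaches a large vector enables early a short semi-positive cycle. -/
lemma Walk.exists_semiPosCycle {M N L H P : ℕ} (hM : NormLE V M) (hN : N = n * M) (hM1 : 1 ≤ M)
    {p q : Fin n} {π : List (Transition n)} (h : Walk V p π q)
    (hnn : ∀ i ≤ π.length, 0 ≤ vecAt π 0 i) (hP : P = 400 * N ^ 6) (hH : H = P ^ n + M)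
    (hL : n * (H + 1) ^ 2 ≤ L) (hL' : 3 * n + (3 * N + 1) * (4 * N) * n ≤ L)
    (hbig : (P : ℤ) ^ n < (vecAt π 0 π.length).1) :
    ∃ k ≤ π.length, (∀ i ≤ k, ∀ j, proj j (vecAt π 0 i) ≤ H) ∧
      SemiPosCycle V L (stateAt π p k) (vecAt π 0 k) := by
  by_contra hc
  push Not at hc
  have h1 := h.proj_le_pow hM hN hM1 hnn hP hH hL hL' hc π.length le_rfl 0
  have hn : 1 ≤ n := Fin.pos p
  have hN1 : 1 ≤ N := by rw [hN]; exact Nat.mul_pos hn hM1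
  have hP1 : 1 ≤ P := by rw [hP]; have := Nat.pow_pos (n := 6) hN1; omega
  have h2 : (P : ℤ) ^ (n - reachCount V (stateAt π p π.length) + 1) ≤ (P : ℤ) ^ n :=
    pow_le_pow_right₀ (by exact_mod_cast hP1) (by
      have := reachCount_pos (V := V) (stateAt π p π.length)
      omega)
  simp only [proj, if_true] at h1
  omega

end Growth

/-! ### Turning towards the target -/

/-- The oriented area spanned by two vectors, for the orientation `σ`. -/
def area (σ : ℤ) (m y : Vec2) : ℤ := σ * (m.1 * y.2 - m.2 * y.1)

lemma lin_eq_area (σ : ℤ) (m y : Vec2) : lin (-(σ * m.2)) (σ * m.1) y = area σ m y := by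
  simp only [lin_apply, area]; ring

lemma area_swap (σ : ℤ) (m y : Vec2) : area σ m y = -area σ y m := by
  simp only [area]; ring

lemma SemiPos.sum_pos {m : Vec2} (h : SemiPos m) : 0 < m.1 + m.2 := by
  obtain ⟨h1, h2, h3⟩ := h
  omega

/-- A nonempty finite set of semi-positive vectors has an extremal element. -/
lemma exists_extremal (σ : ℤ) {S : Set Vec2} (hfin : S.Finite) (hne : S.Nonempty)
    (hS : ∀ m ∈ S, SemiPos m) : ∃ m ∈ S, ∀ w ∈ S, area σ m w ≤ 0 := by
  obtain ⟨m, hm, hmax⟩ := Set.exists_max_image S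
    (fun m => ((σ * m.2 : ℤ) : ℚ) / ((m.1 + m.2 : ℤ) : ℚ)) hfin hne
  refine ⟨m, hm, fun w hw => ?_⟩
  have h := hmax w hw
  have hm0 := (hS m hm).sum_pos
  have hw0 := (hS w hw).sum_pos
  rw [div_le_div_iff₀ (by exact_mod_cast hw0) (by exact_mod_cast hm0)] at h
  have h' : σ * w.2 * (m.1 + m.2) ≤ σ * m.2 * (w.1 + w.2) := by exact_mod_cast h
  simp only [area]
  linarith

lemma area_le_of_turn {σ : ℤ} {m m' y : Vec2} {c : ℤ} (hm : SemiPos m) (hm' : SemiPos m')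
    (hy : 0 ≤ y) (ht : area σ m m' ≤ 0) (h : area σ m' y ≤ (m'.1 + m'.2) * c) :
    area σ m y ≤ (m.1 + m.2) * c := by
  have h0 := hm.sum_pos
  have h0' := hm'.sum_pos
  have hy1 : 0 ≤ y.1 := hy.1
  have hy2 : 0 ≤ y.2 := hy.2
  have key : area σ m y * (m'.1 + m'.2) =
      area σ m' y * (m.1 + m.2) + area σ m m' * (y.1 + y.2) := by
    simp only [area]; ring
  have e1 : area σ m m' * (y.1 + y.2) ≤ 0 :=
    mul_nonpos_of_nonpos_of_nonneg ht (by omega)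
  have e2 : area σ m' y * (m.1 + m.2) ≤ (m'.1 + m'.2) * c * (m.1 + m.2) := by gcongr
  refine le_of_mul_le_mul_right (a := m'.1 + m'.2) ?_ h0'
  linarith

lemma semiPos_of_area {σ : ℤ} {m u w : Vec2} (hm : SemiPos m) (hu : 0 ≤ u)
    (h1 : 0 < area σ m u) (h2 : 0 < area σ m w) (h3 : 0 ≤ area σ w u) : SemiPos w := by
  obtain ⟨m1, m2, -⟩ := hm
  have u1 : 0 ≤ u.1 := hu.1
  have u2 : 0 ≤ u.2 := hu.2
  have k1 : area σ m u * w.1 = area σ w u * m.1 + area σ m w * u.1 := by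
    simp only [area]; ring
  have k2 : area σ m u * w.2 = area σ w u * m.2 + area σ m w * u.2 := by
    simp only [area]; ring
  have w1 : 0 ≤ w.1 := by
    refine nonneg_of_mul_nonneg_right ?_ h1
    rw [k1]; positivity
  have w2 : 0 ≤ w.2 := by
    refine nonneg_of_mul_nonneg_right ?_ h1
    rw [k2]; positivity
  refine ⟨w1, w2, ?_⟩
  by_contra hc
  have e1 : w.1 = 0 := by omega
  have e2 : w.2 = 0 := by omega
  simp [area, e1, e2] at h2

section Turning

variable {n : ℕ} {V : VASS n}

/-- If the target of a run is far from the directions of all short cycles and of `v`, then it lies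
in the interior of the cone of two of these directions, available in the right order. -/
lemma Walk.exists_turn {M N A A₀ : ℕ} (hM : NormLE V M) (hN : N = n * M) (hn : 1 ≤ n)
    {p q : Fin n} {π : List (Transition n)} (h : Walk V p π q)
    (hnn : ∀ i ≤ π.length, 0 ≤ vecAt π 0 i) {t₁ : ℕ} (ht₁ : t₁ ≤ π.length)
    (hx : (vecAt π 0 t₁).1 ≤ A₀ ∧ (vecAt π 0 t₁).2 ≤ A₀) {σ : ℤ} (hσ : |σ| = 1)
    {u v : Vec2} (hu : u = vecAt π 0 π.length) (hv : SemiPos v) (hvu : 0 < area σ v u)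
    (hfar : ∀ m, SemiPos m → m = v ∨ |m.1| ≤ N ∧ |m.2| ≤ N →
      A * (m.1 + m.2) < 2 * |area σ m u|)
    (hA : 2 * (A₀ + 2 * N * ((2 * N + 1) ^ 2 + 1)) ≤ A) :
    ∃ m w s t, SemiPos m ∧ t₁ ≤ s ∧ s ≤ t ∧ t ≤ π.length ∧
      (m = v ∧ s = t₁ ∨ ShortCycle V (stateAt π p s) m) ∧ ShortCycle V (stateAt π p t) w ∧
      0 < area σ m u ∧ 0 < area σ m w ∧ 0 < area σ u w := by
  by_contra hcon
  push Not at hcon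
  have hu0 : 0 ≤ u := hu ▸ hnn _ le_rfl
  let G : ℕ → Set Vec2 := fun s => {m | SemiPos m ∧ 0 < area σ m u ∧
    (m = v ∨ ∃ k, t₁ ≤ k ∧ k ≤ s ∧ ShortCycle V (stateAt π p k) m)}
  have hNz : (N : ℤ) = n * M := by rw [hN]; push_cast; ring
  have hbox : ∀ s, ∀ m ∈ G s, m = v ∨ |m.1| ≤ (N : ℤ) ∧ |m.2| ≤ (N : ℤ) := by
    rintro s m ⟨-, -, hm | ⟨k, -, -, hm⟩⟩
    · exact Or.inl hm
    · rw [hNz]; exact Or.inr (hm.abs_le hM)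
  let box : Finset Vec2 := insert v (Finset.Icc (-(N : ℤ)) N ×ˢ Finset.Icc (-(N : ℤ)) N)
  have hsub : ∀ s, G s ⊆ box := by
    intro s m hm
    rcases hbox s m hm with rfl | hm
    · simp [box]
    · simp only [abs_le] at hm
      have : m ∈ Finset.Icc (-(N : ℤ)) N ×ˢ Finset.Icc (-(N : ℤ)) N := by
        rw [Finset.mem_product, Finset.mem_Icc, Finset.mem_Icc]; exact hm
      exact Finset.mem_coe.2 (Finset.mem_insert_of_mem this)
  have hfin : ∀ s, (G s).Finite := fun s => (Finset.finite_toSet box).subset (hsub s)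
  have hcard : ∀ s, (G s).ncard ≤ (2 * N + 1) ^ 2 + 1 := by
    intro s
    refine (Set.ncard_le_ncard (hsub s) (Finset.finite_toSet box)).trans ?_
    rw [Set.ncard_coe_finset]
    refine (Finset.card_insert_le _ _).trans ?_
    rw [Finset.card_product, Int.card_Icc]
    have : ((N : ℤ) + 1 - -N).toNat = 2 * N + 1 := by omega
    rw [this, pow_two]
  have hvG : ∀ s, v ∈ G s := fun s => ⟨hv, hvu, Or.inl rfl⟩
  have hmono : ∀ s t, s ≤ t → G s ⊆ G t := by
    rintro s t hst m ⟨h1, h2, h3⟩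
    exact ⟨h1, h2, h3.imp_right fun ⟨k, a, b, c⟩ => ⟨k, a, by omega, c⟩⟩
  have hturn : ∀ s t m w, t₁ ≤ s → s ≤ t → t ≤ π.length → m ∈ G s →
      ShortCycle V (stateAt π p t) w → 0 < area σ m w → w ∈ G t := by
    rintro s t m w hs hst ht ⟨m1, m2, m3⟩ hw hmw
    have h1 : area σ u w ≤ 0 := by
      rcases m3 with rfl | ⟨k, k1, k2, k3⟩
      · exact hcon m w t₁ t m1 le_rfl (by omega) ht (Or.inl ⟨rfl, rfl⟩) hw m2 hmw
      · exact hcon m w k t m1 k1 (by omega) ht (Or.inr k3) hw m2 hmw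
    have h2 : 0 ≤ area σ w u := by rw [area_swap]; omega
    have h3 := semiPos_of_area m1 hu0 m2 hmw h2
    refine ⟨h3, lt_of_le_of_ne h2 fun h0 => ?_, Or.inr ⟨t, by omega, le_rfl, hw⟩⟩
    have h4 := hfar w h3 (Or.inr (by rw [hNz]; exact hw.abs_le hM))
    rw [← h0, abs_zero, mul_zero] at h4
    have := h3.sum_pos
    have : (0 : ℤ) ≤ A * (w.1 + w.2) := by positivity
    omega
  have habs : ∀ m, SemiPos m → |-(σ * m.2)| + |σ * m.1| = m.1 + m.2 := by
    rintro m ⟨m1, m2, -⟩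
    rw [abs_neg, abs_mul, abs_mul, hσ, abs_of_nonneg m1, abs_of_nonneg m2]; ring
  have main : ∀ t, t₁ ≤ t → t ≤ π.length → ∀ m ∈ G t, (∀ w ∈ G t, area σ m w ≤ 0) →
      area σ m (vecAt π 0 t) ≤ (m.1 + m.2) * (A₀ + 2 * N * (G t).ncard) := by
    intro t
    induction t using Nat.strong_induction_on with
    | _ t ih =>
    intro ht1 ht m hm hmax
    have hex : ∃ s, t₁ ≤ s ∧ m ∈ G s := ⟨t, ht1, hm⟩
    classical
    obtain ⟨s, hs⟩ : ∃ s, s = Nat.find hex := ⟨_, rfl⟩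
    obtain ⟨hs1, hs2⟩ : t₁ ≤ s ∧ m ∈ G s := hs ▸ Nat.find_spec hex
    have hst : s ≤ t := hs ▸ Nat.find_min' hex ⟨ht1, hm⟩
    have hms := hm.1
    have hm0 := hms.sum_pos
    have e1 := h.lin_vecAt_le hM 0 hst ht (-(σ * m.2)) (σ * m.1) (by
      intro k hk1 hk2 w hw
      rw [lin_eq_area]
      by_contra hc
      push Not at hc
      have := hmono k t hk2.le (hturn s k m w hs1 hk1 (by omega) hs2 hw hc)
      exact absurd (hmax w this) (by omega))
    rw [lin_eq_area, lin_eq_area, habs m hms,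
      show (n : ℤ) * (M * (m.1 + m.2)) = (m.1 + m.2) * N by rw [hNz]; ring] at e1
    have hpos : 1 ≤ (G t).ncard := (Set.ncard_pos (hfin t)).2 ⟨v, hvG t⟩
    rcases hs1.eq_or_lt with hs0 | hs0
    · have e2 : area σ m (vecAt π 0 s) ≤ (m.1 + m.2) * A₀ := by
        rw [← hs0]
        obtain ⟨m1, m2, -⟩ := hms
        have x0 := hnn t₁ ht₁
        have x1 : 0 ≤ (vecAt π 0 t₁).1 := x0.1
        have x2 : 0 ≤ (vecAt π 0 t₁).2 := x0.2
        have a1 : m.1 * (vecAt π 0 t₁).2 ≤ m.1 * A₀ := by gcongr; exact hx.2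
        have a2 : m.2 * (vecAt π 0 t₁).1 ≤ m.2 * A₀ := by gcongr; exact hx.1
        have b1 : 0 ≤ m.1 * (vecAt π 0 t₁).2 := by positivity
        have b2 : 0 ≤ m.2 * (vecAt π 0 t₁).1 := by positivity
        have c1 : 0 ≤ m.1 * (A₀ : ℤ) := by positivity
        have c2 : 0 ≤ m.2 * (A₀ : ℤ) := by positivity
        rcases (abs_eq zero_le_one).1 hσ with rfl | rfl <;> simp only [area] <;> linarith
      have e3 : (N : ℤ) ≤ 2 * N * (G t).ncard := by
        have : (1 : ℤ) ≤ (G t).ncard := by exact_mod_cast hpos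
        nlinarith
      calc _ ≤ (m.1 + m.2) * (A₀ + N) := by linarith
        _ ≤ _ := by gcongr
    · obtain ⟨s₀, rfl⟩ := Nat.exists_eq_succ_of_ne_zero (by omega : s ≠ 0)
      obtain ⟨m', hm', hmax'⟩ := exists_extremal σ (hfin s₀) ⟨v, hvG s₀⟩ (fun m hm => hm.1)
      have f1 := ih s₀ (by omega) (by omega) (by omega) m' hm' hmax'
      have f2 := area_le_of_turn hms hm'.1 (hnn s₀ (by omega))
        (hmax m' (hmono s₀ t (by omega) hm')) f1
      have f3 := h.step_le hM 0 (i := s₀) (by omega) (-(σ * m.2)) (σ * m.1)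
      rw [lin_eq_area, lin_eq_area, habs m hms] at f3
      have hnot : m ∉ G s₀ := fun hc => Nat.find_min hex (m := s₀) (by omega) ⟨by omega, hc⟩
      have hlt : (G s₀).ncard < (G t).ncard :=
        Set.ncard_lt_ncard ⟨hmono s₀ t (by omega), fun hc => hnot (hc hm)⟩ (hfin t)
      have hltz : ((G s₀).ncard : ℤ) + 1 ≤ (G t).ncard := by exact_mod_cast hlt
      have hMN : (M : ℤ) ≤ N := by
        have : M ≤ N := by rw [hN]; exact Nat.le_mul_of_pos_left _ hn
        exact_mod_cast this
      have g1 : (A₀ : ℤ) + 2 * N * (G s₀).ncard + M + N ≤ A₀ + 2 * N * (G t).ncard := by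
        nlinarith
      calc _ ≤ (m.1 + m.2) * ((A₀ : ℤ) + 2 * N * (G s₀).ncard + M + N) := by
            simp only [Nat.succ_eq_add_one] at *
            linarith
        _ ≤ _ := by gcongr
  obtain ⟨m, hm, hmax⟩ := exists_extremal σ (hfin π.length) ⟨v, hvG _⟩ (fun m hm => hm.1)
  have h1 := main π.length ht₁ le_rfl m hm hmax
  rw [← hu] at h1
  have h2 := hfar m hm.1 (hbox _ m hm)
  rw [abs_of_pos hm.2.1] at h2
  have h3 := hm.1.sum_pos
  have h4 : ((A₀ : ℤ) + 2 * N * (G π.length).ncard) ≤ A₀ + 2 * N * ((2 * N + 1) ^ 2 + 1) := by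
    have : ((G π.length).ncard : ℤ) ≤ (2 * N + 1) ^ 2 + 1 := by exact_mod_cast hcard _
    gcongr
  have h5 : 2 * ((A₀ : ℤ) + 2 * N * ((2 * N + 1) ^ 2 + 1)) ≤ A := by exact_mod_cast hA
  have h6 : (m.1 + m.2) * ((A₀ : ℤ) + 2 * N * (G π.length).ncard) * 2 ≤ (m.1 + m.2) * A := by
    rw [mul_assoc]
    gcongr
    linarith
  linarith

end Turning

/-! ### Belts -/

/-- `u` is far from all rays generated by semi-positive vectors of norm at most `A`. -/
def Far (A : ℕ) (u : Vec2) : Prop :=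
  ∀ m, SemiPos m → vnorm m ≤ A → A * (m.1 + m.2) < 2 * |area 1 m u|

lemma abs_area {σ : ℤ} (hσ : |σ| = 1) (m u : Vec2) : |area σ m u| = |area 1 m u| := by
  simp [area, abs_mul, hσ]

lemma distToRay_le (u v : Vec2) {a c : ℝ} (ha : 0 ≤ a)
    (h : ((u.1 : ℝ) - a * v.1) ^ 2 + ((u.2 : ℝ) - a * v.2) ^ 2 ≤ c ^ 2) (hc : 0 ≤ c) :
    distToRay u v ≤ c := by
  have hmem : a • toE v ∈ rayE v := ⟨a, ha, rfl⟩
  refine (Metric.infDist_le_dist_of_mem hmem).trans ?_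
  rw [EuclideanSpace.dist_eq]
  refine Real.sqrt_le_iff.2 ⟨hc, ?_⟩
  simpa [toE, Fin.sum_univ_two, Real.dist_eq, sq_abs] using h

lemma far_of_not_inBelt {A : ℕ} {u : Vec2} (hu : 0 ≤ u)
    (h : ∀ v : Vec2, 0 ≤ v → vnorm v ≤ A → ¬ distToRay u v ≤ (A : ℝ)) : Far A u := by
  intro m hm hmA
  by_contra hcon
  push Not at hcon
  obtain ⟨h1, h2, h3⟩ := hm
  refine h m ⟨h1, h2⟩ hmA ?_
  have hu1 : (0 : ℝ) ≤ u.1 := by exact_mod_cast hu.1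
  have hu2 : (0 : ℝ) ≤ u.2 := by exact_mod_cast hu.2
  have h1' : (0 : ℝ) ≤ m.1 := by exact_mod_cast h1
  have h2' : (0 : ℝ) ≤ m.2 := by exact_mod_cast h2
  have hc : 2 * |(m.1 : ℝ) * u.2 - m.2 * u.1| ≤ A * (m.1 + m.2) := by
    simp only [area, one_mul] at hcon
    exact_mod_cast hcon
  rcases le_total m.2 m.1 with hle | hle
  · have hle' : (m.2 : ℝ) ≤ m.1 := by exact_mod_cast hle
    have hpos : (0 : ℝ) < m.1 := by
      have : 0 < m.1 := by omega
      exact_mod_cast this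
    refine distToRay_le u m (a := u.1 / m.1) (by positivity) ?_ (by positivity)
    have e1 : (u.1 : ℝ) - u.1 / m.1 * m.1 = 0 := by field_simp; ring
    have e2 : (u.2 : ℝ) - u.1 / m.1 * m.2 = (m.1 * u.2 - m.2 * u.1) / m.1 := by
      field_simp
    rw [e1, e2]
    have : |((m.1 : ℝ) * u.2 - m.2 * u.1) / m.1| ≤ A := by
      rw [abs_div, abs_of_pos hpos, div_le_iff₀ hpos]
      nlinarith [(Nat.cast_nonneg A : (0 : ℝ) ≤ A)]
    nlinarith [sq_le_sq' (abs_le.1 this).1 (abs_le.1 this).2]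
  · have hle' : (m.1 : ℝ) ≤ m.2 := by exact_mod_cast hle
    have hpos : (0 : ℝ) < m.2 := by
      have : 0 < m.2 := by omega
      exact_mod_cast this
    refine distToRay_le u m (a := u.2 / m.2) (by positivity) ?_ (by positivity)
    have e1 : (u.2 : ℝ) - u.2 / m.2 * m.2 = 0 := by field_simp; ring
    have e2 : (u.1 : ℝ) - u.2 / m.2 * m.1 = -((m.1 * u.2 - m.2 * u.1) / m.2) := by
      field_simp; ring
    rw [e1, e2]
    have : |((m.1 : ℝ) * u.2 - m.2 * u.1) / m.2| ≤ A := by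
      rw [abs_div, abs_of_pos hpos, div_le_iff₀ hpos]
      nlinarith [(Nat.cast_nonneg A : (0 : ℝ) ≤ A)]
    nlinarith [sq_le_sq' (abs_le.1 this).1 (abs_le.1 this).2]

lemma vnorm_le {v : Vec2} {A : ℕ} (h : |v.1| ≤ (A : ℤ) ∧ |v.2| ≤ (A : ℤ)) : vnorm v ≤ A := by
  simp only [vnorm, Int.abs_eq_natAbs] at h ⊢
  omega

lemma Far.lt {A : ℕ} {u : Vec2} (h : Far A u) (hA : 1 ≤ A) (hu : 0 ≤ u) :
    A < 2 * u.1 ∧ A < 2 * u.2 := by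
  have h1 := h (0, 1) (by simp [SemiPos]) (by simpa [vnorm] using hA)
  have h2 := h (1, 0) (by simp [SemiPos]) (by simpa [vnorm] using hA)
  have h3 := hu.1
  have h4 := hu.2
  simp only [Prod.fst_zero, Prod.snd_zero] at h3 h4
  simp [area, abs_of_nonneg h3, abs_of_nonneg h4] at h1 h2
  exact ⟨h1, h2⟩

/-! ### Sequential cones -/

lemma toQ_mem_seqCone {σ : ℤ} (v : Vec2) {m w y : Vec2} (hy : 0 ≤ y) (hm : SemiPos m)
    (hmw : 0 < area σ m w) (hmy : 0 ≤ area σ m y) (hyw : 0 ≤ area σ y w) :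
    toQ y ∈ SeqCone [v, v, m, w] := by
  have hD : (0 : ℚ) < area σ m w := by exact_mod_cast hmw
  have ha : (0 : ℚ) ≤ area σ y w / area σ m w := by
    have : (0 : ℚ) ≤ area σ y w := by exact_mod_cast hyw
    positivity
  have hb : (0 : ℚ) ≤ area σ m y / area σ m w := by
    have : (0 : ℚ) ≤ area σ m y := by exact_mod_cast hmy
    positivity
  have hsum : toQ y = ((area σ y w : ℚ) / area σ m w) • toQ m +
      ((area σ m y : ℚ) / area σ m w) • toQ w := by
    have hne := hD.ne'
    ext
    · simp only [toQ, Prod.fst_add, Prod.smul_fst, smul_eq_mul]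
      field_simp
      simp only [area]
      push_cast
      ring
    · simp only [toQ, Prod.snd_add, Prod.smul_snd, smul_eq_mul]
      field_simp
      simp only [area]
      push_cast
      ring
  have hy' : (0 : ℚ × ℚ) ≤ toQ y := by
    refine ⟨?_, ?_⟩
    · simpa [toQ] using hy.1
    · simpa [toQ] using hy.2
  have hm' : (0 : ℚ × ℚ) ≤ toQ m := by
    refine ⟨?_, ?_⟩
    · simpa [toQ] using hm.1
    · simpa [toQ] using hm.2.1
  refine ⟨![0, 0, (area σ y w : ℚ) / area σ m w, (area σ m y : ℚ) / area σ m w], ?_, ?_, ?_⟩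
  · intro i
    fin_cases i <;> simp [ha, hb]
  · intro k hk
    simp only [List.length_cons, List.length_nil] at hk
    have hc : k = 0 ∨ k = 1 ∨ k = 2 ∨ k = 3 ∨ k = 4 := by omega
    rcases hc with rfl | rfl | rfl | rfl | rfl
    · simp
    · simp
    · simp [Fin.sum_univ_four]
    · simpa [Fin.sum_univ_four] using smul_nonneg ha hm'
    · simpa [Fin.sum_univ_four, ← hsum] using hy'
  · simpa [Fin.sum_univ_four] using hsum

lemma rayQ_ne {u y : Vec2} (hy : y.1 * u.2 ≠ y.2 * u.1) :
    rayQ (toQ u) ≠ rayQ (toQ y) := by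
  intro h
  have : toQ y ∈ rayQ (toQ u) := h ▸ ⟨1, zero_le_one, (one_smul _ _).symm⟩
  obtain ⟨a, -, ha⟩ := this
  have h1 := congrArg Prod.fst ha
  have h2 := congrArg Prod.snd ha
  simp only [toQ, Prod.smul_fst, Prod.smul_snd, smul_eq_mul] at h1 h2
  apply hy
  have : (y.1 : ℚ) * u.2 = y.2 * u.1 := by rw [h1, h2]; ring
  exact_mod_cast this

lemma area_multiple (σ K : ℤ) (m u : Vec2) :
    area σ m (K * u.1 + 1, K * u.2) = K * area σ m u - σ * m.2 := by
  simp only [area]; ring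

lemma area_multiple_nonneg {σ K : ℤ} (hσ : |σ| = 1) {m u : Vec2} (h : 0 < area σ m u)
    (hK : |m.2| ≤ K) : 0 ≤ area σ m (K * u.1 + 1, K * u.2) := by
  rw [area_multiple]
  have h1 : σ * m.2 ≤ |m.2| := (le_abs_self _).trans (by rw [abs_mul, hσ, one_mul])
  have h2 := abs_nonneg m.2
  nlinarith

lemma area_multiple_nonneg_left {σ K : ℤ} (hσ : |σ| = 1) {w u : Vec2} (h : 0 < area σ u w)
    (hK : |w.2| ≤ K) : 0 ≤ area σ (K * u.1 + 1, K * u.2) w := by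
  have h3 : area σ (K * u.1 + 1, K * u.2) w = K * area σ u w + σ * w.2 := by
    simp only [area]; ring
  rw [h3]
  have h1 : -(σ * w.2) ≤ |w.2| := (neg_le_abs _).trans (by rw [abs_mul, hσ, one_mul])
  have h2 := abs_nonneg w.2
  nlinarith

/-- If `u` is in the interior of two cones, then so is a vector in a different direction. -/
lemma nonTrivial_inter {σ σ' : ℤ} {u v m w v' m' w' : Vec2} (hσ : |σ| = 1) (hσ' : |σ'| = 1)
    (hu1 : 0 < u.1) (hu2 : 0 < u.2)
    (hm : SemiPos m) (hmu : 0 < area σ m u) (hmw : 0 < area σ m w) (huw : 0 < area σ u w)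
    (hm' : SemiPos m') (hmu' : 0 < area σ' m' u) (hmw' : 0 < area σ' m' w')
    (huw' : 0 < area σ' u w') :
    NonTrivial (SeqCone [v, v, m, w] ∩ SeqCone [v', v', m', w']) := by
  have hu : 0 ≤ u := ⟨hu1.le, hu2.le⟩
  obtain ⟨K, hK⟩ : ∃ K : ℤ, K = |m.2| + |w.2| + |m'.2| + |w'.2| := ⟨_, rfl⟩
  have a1 := abs_nonneg m.2
  have a2 := abs_nonneg w.2
  have a3 := abs_nonneg m'.2
  have a4 := abs_nonneg w'.2
  have hK0 : 0 ≤ K := by omega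
  have hy : (0 : Vec2) ≤ (K * u.1 + 1, K * u.2) :=
    ⟨show 0 ≤ K * u.1 + 1 by positivity, show 0 ≤ K * u.2 by positivity⟩
  refine ⟨toQ u, ⟨toQ_mem_seqCone v hu hm hmw hmu.le huw.le,
    toQ_mem_seqCone v' hu hm' hmw' hmu'.le huw'.le⟩, toQ (K * u.1 + 1, K * u.2),
    ⟨toQ_mem_seqCone v hy hm hmw (area_multiple_nonneg hσ hmu (by omega))
        (area_multiple_nonneg_left hσ huw (by omega)),
      toQ_mem_seqCone v' hy hm' hmw' (area_multiple_nonneg hσ' hmu' (by omega))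
        (area_multiple_nonneg_left hσ' huw' (by omega))⟩, ?_, ?_, ?_⟩
  · intro h
    have := congrArg Prod.snd h
    simp only [toQ, Prod.snd_zero, Int.cast_eq_zero] at this
    omega
  · intro h
    have := congrArg Prod.fst h
    simp only [toQ, Prod.fst_zero, Int.cast_eq_zero] at this
    have : 0 ≤ K * u.1 := by positivity
    omega
  · refine rayQ_ne ?_
    intro h
    simp only at h
    nlinarith

/-! ### Sequentially enabled cycles -/

section Sequential

variable {n : ℕ} {V : VASS n}

/-- A run from `0` to a vector far from all rays sequentially enables cycles whose cone contains
this vector in its interior. -/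
lemma Walk.exists_seqEnabled {M N P A : ℕ} (hM : NormLE V M) (hN : N = n * M) (hM1 : 1 ≤ M)
    (hP : P = 400 * N ^ 6) (hA : 80 * N ^ 4 * (P ^ n) ^ 2 ≤ A)
    {p q : Fin n} {π : List (Transition n)} (h : Walk V p π q)
    (hnn : ∀ i ≤ π.length, 0 ≤ vecAt π 0 i) {u : Vec2} (hu : u = vecAt π 0 π.length)
    (hfar : Far A u) :
    ∃ σ v m w, |σ| = 1 ∧ SeqEnabled V A π p 0 v v m w ∧ SemiPos m ∧ 0 < area σ m u ∧
      0 < area σ m w ∧ 0 < area σ u w := by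
  have hn : 1 ≤ n := Fin.pos p
  have hN1 : 1 ≤ N := by rw [hN]; exact Nat.mul_pos hn hM1
  have hnN : n ≤ N := by rw [hN]; exact Nat.le_mul_of_pos_right _ hM1
  have hMN : M ≤ N := by rw [hN]; exact Nat.le_mul_of_pos_left _ hn
  have hu0 : 0 ≤ u := hu ▸ hnn _ le_rfl
  obtain ⟨R, hR⟩ : ∃ R, R = P ^ n := ⟨_, rfl⟩
  have hNP : N ≤ P := by
    rw [hP]
    calc N = N ^ 1 := (pow_one N).symm
      _ ≤ N ^ 6 := Nat.pow_le_pow_right hN1 (by norm_num)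
      _ ≤ _ := Nat.le_mul_of_pos_left _ (by norm_num)
  have hNR : N ≤ R := by
    rw [hR]
    exact hNP.trans (Nat.le_self_pow (by omega) _)
  have hR1 : 1 ≤ R := hN1.trans hNR
  rw [← hR] at hA
  have hRR : R ≤ R ^ 2 := Nat.le_self_pow (by norm_num) _
  have hN4 : N ^ 3 ≤ N ^ 4 := Nat.pow_le_pow_right hN1 (by norm_num)
  have hN2 : N ^ 2 ≤ N ^ 3 := Nat.pow_le_pow_right hN1 (by norm_num)
  have hNN : N ≤ N ^ 2 := Nat.le_self_pow (by norm_num) _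
  have hNR' : N ^ 3 ≤ N ^ 3 * R ^ 2 := Nat.le_mul_of_pos_right _ (by positivity)
  have hRR' : R ^ 2 ≤ N ^ 3 * R ^ 2 := Nat.le_mul_of_pos_left _ (by positivity)
  have hA' : 80 * (N ^ 3 * R ^ 2) ≤ A := le_trans (by rw [← mul_assoc]; gcongr) hA
  obtain ⟨A₀, hA₀⟩ : ∃ A₀, A₀ = 19 * (N ^ 3 * R ^ 2) := ⟨_, rfl⟩
  have hlt := hfar.lt (by omega) hu0
  obtain ⟨t₁, ht₁, hbd, γ, hγ, hγl, hγp, hγa⟩ := h.exists_semiPosCycle (L := A₀) (H := R + M)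
    hM hN hM1 hnn hP (by rw [hR])
    (by
      have e : n * (R + M + 1) ^ 2 ≤ N * (3 * R) ^ 2 := by gcongr; omega
      have e2 : N * R ^ 2 ≤ N ^ 3 * R ^ 2 := by gcongr; omega
      nlinarith)
    (by
      have e : 3 * n + (3 * N + 1) * (4 * N) * n ≤ 3 * N + (3 * N + 1) * (4 * N) * N := by gcongr
      nlinarith)
    (by
      rw [← hu]
      have : ((P ^ n : ℕ) : ℤ) < u.1 := by rw [← hR]; omega
      exact_mod_cast this)
  obtain ⟨v, hv⟩ : ∃ v, v = effect γ := ⟨_, rfl⟩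
  rw [← hv] at hγp
  have hvA : vnorm v ≤ A := by
    have e := hγ.abs_effect_le hM
    rw [← hv] at e
    have e2 : γ.length * M ≤ A := by
      calc γ.length * M ≤ A₀ * N := by gcongr
        _ = 19 * N ^ 4 * R ^ 2 := by rw [hA₀]; ring
        _ ≤ 80 * N ^ 4 * R ^ 2 := by gcongr; norm_num
        _ ≤ A := hA
    have e3 : (γ.length : ℤ) * M ≤ A := by exact_mod_cast e2
    exact vnorm_le ⟨e.1.trans e3, e.2.trans e3⟩
  have hvu := hfar v hγp hvA
  obtain ⟨σ, hσ, hσv⟩ : ∃ σ : ℤ, |σ| = 1 ∧ 0 < area σ v u := by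
    have h0 : 0 < |area 1 v u| := by
      have : 0 ≤ (A : ℤ) * (v.1 + v.2) := mul_nonneg (by positivity) hγp.sum_pos.le
      omega
    rcases lt_or_gt_of_ne (abs_pos.1 h0) with h1 | h1
    · refine ⟨-1, by simp, ?_⟩
      simp only [area] at h1 ⊢
      omega
    · exact ⟨1, by simp, h1⟩
  have hpt : ∀ i ≤ t₁, (vecAt π 0 i).1 ≤ ((R + M : ℕ) : ℤ) ∧
      (vecAt π 0 i).2 ≤ ((R + M : ℕ) : ℤ) := fun i hi =>
    ⟨by simpa [proj] using hbd i hi 0, by simpa [proj] using hbd i hi 1⟩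
  have hHA : R + M ≤ A₀ := by omega
  obtain ⟨m, w, s, t, hm, hs, hst, ht, hmc, hwc, hmu, hmw, huw⟩ := h.exists_turn (A := A)
    (A₀ := A₀) hM hN hn hnn ht₁
    (by have := hpt t₁ le_rfl; constructor <;> omega) hσ hu hγp hσv
    (fun m hm hc => by
      rw [abs_area hσ]
      refine hfar m hm ?_
      rcases hc with rfl | hc
      · exact hvA
      · exact (vnorm_le hc).trans (by omega))
    (by nlinarith)
  have hγ0 : γ ≠ [] := by
    rintro rfl
    rw [hv] at hγp
    simp [SemiPos, effect] at hγp
  obtain ⟨μ, hμ, hμ0, hμl, rfl⟩ : ∃ μ, Walk V (stateAt π p s) μ (stateAt π p s) ∧ μ ≠ [] ∧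
      μ.length ≤ A ∧ effect μ = m := by
    rcases hmc with ⟨rfl, rfl⟩ | ⟨μ, h0, hl, hμ, he⟩
    · exact ⟨γ, hγ, hγ0, by omega, hv.symm⟩
    · exact ⟨μ, hμ, h0, by omega, he⟩
  obtain ⟨ω, hω0, hωl, hω, rfl⟩ := hwc
  refine ⟨σ, v, effect μ, effect ω, hσ, ?_, hm, hmu, hmw, huw⟩
  have hlen₁ : (π.take t₁).length = t₁ := by simpa using ht₁
  have hlen₃ := seg_length (π := π) (i := t₁) (j := s) (by omega)
  have hlen₄ := seg_length (π := π) (i := s) (j := t) (by omega)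
  have e₃ : t₁ + (s - t₁) = s := by omega
  have e₄ : s + (t - s) = t := by omega
  refine ⟨π.take t₁, [], _root_.seg π t₁ s, _root_.seg π s t, π.drop t, γ, γ, μ, ω, ?_,
    hγ.isCycle hγ0, hγ.isCycle hγ0, hμ.isCycle hμ0, hω.isCycle hω0, by omega, by omega, hμl,
    by omega, hv.symm, hv.symm, rfl, rfl, hγp, ?_, ?_, ?_, ?_, ?_, ?_⟩
  · have e : π.take s = π.take t₁ ++ _root_.seg π t₁ s := by
      rw [_root_.seg, ← List.take_add, e₃]
    rw [List.append_nil, ← e]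
    exact seg_split π hst
  · rw [hlen₁]
    exact ⟨hγ.startsAt, hγa⟩
  · intro i hi
    rw [hlen₁] at hi
    have := hpt i hi
    constructor <;> omega
  · intro _
    simpa only [List.length_nil, add_zero, hlen₁] using hγ.startsAt
  · intro hpos
    simp only [List.length_nil, add_zero, hlen₁]
    obtain ⟨j, hj⟩ : ∃ j : Fin 2, proj j v = 0 := by
      obtain ⟨h1, h2, -⟩ := hγp
      by_cases h0 : v.1 = 0
      · exact ⟨0, by simpa [proj] using h0⟩
      · refine ⟨1, ?_⟩
        have : ¬ 0 < v.2 := fun h3 => hpos ⟨by omega, h3⟩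
        simp only [proj, one_ne_zero, if_false]
        omega
    refine ⟨j, hj, ⟨hγ.startsAt, fun i hi => ?_⟩, fun i _ hi => ?_⟩
    · have := hγa i hi
      simp only [proj]
      split
      · exact this.1
      · exact this.2
    · have := hbd i hi j
      omega
  · simpa only [List.length_nil, add_zero, hlen₁, hlen₃, e₃] using hμ.startsAt
  · simpa only [List.length_nil, add_zero, hlen₁, hlen₃, hlen₄, e₃, e₄] using hω.startsAt

end Sequential

/-! ### Reversal -/

section Reversal

variable {n : ℕ} {V : VASS n}

lemma Walk.rev {p q : Fin n} {π : List (Transition n)} (h : Walk V p π q) :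
    Walk (revV V) q (revPath π) p := by
  induction π generalizing p with
  | nil => exact Eq.symm h
  | cons t π ih =>
    have e : revPath (t :: π) = revPath π ++ [revT t] := by simp [revPath]
    rw [e]
    refine (ih h.2.2).append ⟨Finset.mem_image_of_mem _ h.1, rfl, h.2.1⟩

lemma NormLE.rev {M : ℕ} (h : NormLE V M) : NormLE (revV V) M := by
  intro t ht
  obtain ⟨s, hs, rfl⟩ := Finset.mem_image.1 ht
  simpa [revT] using h s hs

lemma normLE_vassNorm : NormLE V (vassNorm V) := by
  intro t ht
  have : vnorm t.2.1 ≤ vassNorm V := Finset.le_sup (f := fun t => vnorm t.2.1) ht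
  simp only [vnorm, Int.abs_eq_natAbs] at this ⊢
  omega

lemma effect_revPath (π : List (Transition n)) : effect (revPath π) = -effect π := by
  induction π with
  | nil => simp [revPath, effect]
  | cons t π ih =>
    have e : revPath (t :: π) = revPath π ++ [revT t] := by simp [revPath]
    have e2 : effect (t :: π) = t.2.1 + effect π := by simp [effect]
    rw [e, effect_append, ih, e2]
    simp [effect, revT]

lemma length_revPath (π : List (Transition n)) : (revPath π).length = π.length := by
  simp [revPath]

lemma vecAt_revPath {a b : List (Transition n)} (h : effect (a ++ b) = 0) {k : ℕ}
    (hk : k ≤ b.length) :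
    vecAt (revPath b) 0 k = vecAt (a ++ b) 0 ((a ++ b).length - k) := by
  have e1 : (revPath b).take k = revPath (b.drop (b.length - k)) := by
    simp [revPath, List.take_reverse]
  have e2 : (a ++ b).take ((a ++ b).length - k) = a ++ b.take (b.length - k) := by
    rw [List.length_append, Nat.add_sub_assoc hk, List.take_length_add_append]
  have e3 : effect b = effect (b.take (b.length - k)) + effect (b.drop (b.length - k)) := by
    rw [← effect_append, List.take_append_drop]
  rw [effect_append, e3, ← add_assoc] at h
  rw [vecAt, vecAt, e1, e2, effect_revPath, effect_append, neg_eq_of_add_eq_zero_left h]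

end Reversal

/-- Thin–Thick Dichotomy.  There is a polynomial `p` with
natural coefficients such that every (0,0)-run of a 2-VASS `V` with `n` control
states and norm `M` is either `p(nM)ⁿ`-thin or `p(nM)ⁿ`-thick. -/
theorem thin_thick_dichotomy :
    ∃ p : Polynomial ℕ, ∀ (n : ℕ) (V : VASS n) (π : List (Transition n)) (q : Fin n),
      IsZeroRun V π q →
      IsThin ((p.eval (n * vassNorm V)) ^ n) π (0 : Vec2) ∨
      IsThick V ((p.eval (n * vassNorm V)) ^ n) π q := by
  refine ⟨Polynomial.C 12800000 * Polynomial.X ^ 16, ?_⟩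
  intro n V π q hrun
  obtain ⟨M, hM⟩ : ∃ M, M = vassNorm V := ⟨_, rfl⟩
  obtain ⟨A, hA⟩ : ∃ A, A = (Polynomial.eval (n * vassNorm V)
    (Polynomial.C 12800000 * Polynomial.X ^ 16)) ^ n := ⟨_, rfl⟩
  rw [← hA]
  simp only [Polynomial.eval_mul, Polynomial.eval_C, Polynomial.eval_pow, Polynomial.eval_X,
    ← hM] at hA
  obtain ⟨⟨hpath, hstart, hnn⟩, heff⟩ := hrun
  have hwalk := walk_of_isPath hpath hstart
  have hnorm : NormLE V M := hM ▸ normLE_vassNorm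
  refine or_iff_not_imp_left.2 fun hthin => ?_
  simp only [IsThin, not_forall] at hthin
  obtain ⟨i, hi, hbelt⟩ := hthin
  obtain ⟨u, hu⟩ : ∃ u, u = vecAt π 0 i := ⟨_, rfl⟩
  rw [← hu] at hbelt
  have hu0 : 0 ≤ u := hu ▸ hnn i hi
  have hdist : ∀ v : Vec2, 0 ≤ v → vnorm v ≤ A → ¬ distToRay u v ≤ (A : ℝ) :=
    fun v hv hvA hd => hbelt ⟨v, hv, hvA, A, le_rfl, hu0, hd⟩
  have hfar : Far A u := far_of_not_inBelt hu0 hdist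
  have hn : 1 ≤ n := Fin.pos q
  have hM1 : 1 ≤ M := by
    by_contra h0
    have hM0 : M = 0 := by omega
    have e := (hwalk.take i).abs_effect_le hnorm
    have e2 : u = effect (π.take i) := by rw [hu, vecAt, zero_add]
    rw [← e2, hM0] at e
    simp only [Nat.cast_zero, mul_zero, abs_nonpos_iff] at e
    refine hdist 0 le_rfl (by simp [vnorm]) ?_
    exact distToRay_le u 0 le_rfl (by simp [e.1, e.2]) (by positivity)
  have hN1 : 1 ≤ n * M := Nat.mul_pos hn hM1
  have hbound : 80 * (n * M) ^ 4 * ((400 * (n * M) ^ 6) ^ n) ^ 2 ≤ A := by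
    rw [hA, ← pow_mul, mul_comm n 2, pow_mul]
    calc 80 * (n * M) ^ 4 * ((400 * (n * M) ^ 6) ^ 2) ^ n
        ≤ (80 * (n * M) ^ 4) ^ n * ((400 * (n * M) ^ 6) ^ 2) ^ n := by
          gcongr
          exact Nat.le_self_pow (by omega) _
      _ = _ := by rw [← mul_pow]; ring
  have hA1 : 1 ≤ A := by rw [hA]; exact Nat.pow_pos (by positivity)
  have hlt := hfar.lt hA1 hu0
  have hsplit : π = π.take i ++ π.drop i := (List.take_append_drop i π).symm
  have hlen : (π.take i).length = i := by simpa using hi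
  have hvec : ∀ k ≤ (revPath (π.drop i)).length,
      vecAt (revPath (π.drop i)) 0 k = vecAt π 0 (π.length - k) := by
    intro k hk
    rw [length_revPath] at hk
    have := vecAt_revPath (a := π.take i) (b := π.drop i) (by rwa [← hsplit]) hk
    rwa [← hsplit] at this
  obtain ⟨σ, v, m, w, hσ, hseq, hm, hmu, hmw, huw⟩ :=
    (hwalk.take i).exists_seqEnabled hnorm rfl hM1 rfl hbound (u := u)
      (fun k hk => by
        rw [← vecAt_append_left _ (π.drop i) 0 hk, ← hsplit]
        exact hnn k (by omega))
      (by rw [← vecAt_append_left _ (π.drop i) 0 le_rfl, ← hsplit, hlen, hu]) hfar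
  obtain ⟨σ', v', m', w', hσ', hseq', hm', hmu', hmw', huw'⟩ :=
    (hwalk.drop i).rev.exists_seqEnabled hnorm.rev rfl hM1 rfl hbound (u := u)
      (fun k hk => by
        rw [hvec k hk]
        exact hnn _ (by omega))
      (by
        rw [hvec _ le_rfl, length_revPath, List.length_drop, Nat.sub_sub_self hi, hu]) hfar
  exact ⟨π.take i, π.drop i, hsplit, v, v, m, w, v', v', m', w', hseq, hseq',
    nonTrivial_inter hσ hσ' (by omega) (by omega) hm hmu hmw huw hm' hmu' hmw' huw'⟩
end
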